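/- arXiv:math/0305352 — 11 statements merged into one kernel-verified Lean document; each statement's English description precedes it below -/
import Mathlib

section
/- Let G be a sofic group. Then for every finite subset F ⊆ G and every real number ε ∈ (0,1) there exists a finite nonempty set A and an (F,ε)-quasi-action φ : G → (A → A) of G on A which moreover satisfies: φ(1) is the identity map of A; for every g ∈ G with g ≠ 1 the map φ(g) is a bijection of A without fixed points; φ(g⁻¹) = φ(g)⁻¹ for all g ∈ G; and for any two distinct elements e, f ∈ F ∪ {1} the maps φ(e) and φ(f) are (1−ε)-different. -/
/-- Two self-maps of a finite set `A` are `ε`-similar if the number of points where they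
differ is at most `ε·|A|`. They are `(1-ε)`-different if they are not `(1-ε)`-similar. -/
def EpsSimilar {A : Type*} [Fintype A] (ε : ℝ) (e f : A → A) : Prop :=
  (Nat.card {a : A // e a ≠ f a} : ℝ) ≤ ε * Fintype.card A

/-- An `(F, ε)`-quasi-action of a group `G` on a finite set `A`:
(a) `φ(ef)` is `ε`-similar to `φ(e)` followed by `φ(f)` for `e, f ∈ F`;
(b) `φ(1)` is `ε`-similar to the identity;
(c) for `1 ≠ e ∈ F`, `φ(e)` is `(1-ε)`-different from the identity. -/
def IsQuasiAction {G : Type*} [Group G] (F : Finset G) (ε : ℝ)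
    {A : Type*} [Fintype A] (φ : G → A → A) : Prop :=
  (∀ e ∈ F, ∀ f ∈ F, EpsSimilar ε (φ (e * f)) (fun a => φ f (φ e a))) ∧
  EpsSimilar ε (φ 1) id ∧
  (∀ e ∈ F, e ≠ 1 → ¬ EpsSimilar (1 - ε) (φ e) id)

/-- A group `G` is sofic if for every finite subset `F ⊆ G` and every `ε ∈ (0,1)` there is an
`(F, ε)`-quasi-action of `G` on some finite nonempty set. -/
def IsSofic (G : Type*) [Group G] : Prop :=
  ∀ (F : Finset G) (ε : ℝ), 0 < ε → ε < 1 →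
    ∃ (A : Type) (_ : Fintype A) (_ : Nonempty A) (φ : G → A → A),
      IsQuasiAction F ε φ

open scoped Classical in
/-- A canonical transport map between two finsets of the same cardinality. -/
noncomputable def sfTau {A : Type} (S T : Finset A) (a : A) : A :=
  if h : a ∈ S ∧ S.card = T.card then
    (T.equivFin.symm (Fin.cast h.2 (S.equivFin ⟨a, h.1⟩)) : A) else a

lemma sfTau_mem {A : Type} (S T : Finset A) (h : S.card = T.card) (a : A) (ha : a ∈ S) :
    sfTau S T a ∈ T := by
  unfold sfTau
  rw [dif_pos ⟨ha, h⟩]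
  exact Subtype.prop _

lemma sfTau_tau {A : Type} (S T : Finset A) (h : S.card = T.card) (a : A) (ha : a ∈ S) :
    sfTau T S (sfTau S T a) = a := by
  have h1 := sfTau_mem S T h a ha
  have h2 : sfTau S T a = (T.equivFin.symm (Fin.cast h (S.equivFin ⟨a, ha⟩)) : A) := by
    unfold sfTau; rw [dif_pos ⟨ha, h⟩]
  have h3 : (⟨sfTau S T a, h1⟩ : T) = T.equivFin.symm (Fin.cast h (S.equivFin ⟨a, ha⟩)) :=
    Subtype.ext h2
  rw [sfTau, dif_pos ⟨h1, h.symm⟩, h3]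
  simp

open scoped Classical in
lemma sf_construct {G : Type*} [Group G] {A : Type} [Fintype A] (ψ : G → A → A) :
    ∃ φ : G → A × Bool → A × Bool, φ 1 = id ∧
      (∀ g, Function.LeftInverse (φ g⁻¹) (φ g)) ∧
      (∀ g, g ≠ 1 → ∀ b, φ g b ≠ b) ∧
      (∀ g, g ≠ 1 → ∀ a i, ψ g⁻¹ (ψ g a) = a → ψ g a ≠ a → φ g (a, i) = (ψ g a, i)) := by
  let D : G → Finset A := fun g => Finset.univ.filter (fun a => ψ g⁻¹ (ψ g a) = a ∧ ψ g a ≠ a)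
  have memD : ∀ g a, a ∈ D g ↔ (ψ g⁻¹ (ψ g a) = a ∧ ψ g a ≠ a) := by
    intro g a; simp [D]
  have mapD : ∀ g a, a ∈ D g → ψ g a ∈ D g⁻¹ := by
    intro g a ha
    rw [memD] at ha ⊢
    rw [inv_inv, ha.1]
    exact ⟨rfl, fun h => ha.2 h.symm⟩
  have cardle : ∀ g, (D g).card ≤ (D g⁻¹).card := by
    intro g
    refine Finset.card_le_card_of_injOn (ψ g) (fun a ha => mapD g a ha) ?_
    intro a ha b hb hab
    have ha' := ((memD g a).1 ha).1
    have hb' := ((memD g b).1 hb).1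
    rw [← ha', ← hb', hab]
  have cardeq : ∀ g, ((D g)ᶜ).card = ((D g⁻¹)ᶜ).card := by
    intro g
    have h1 := cardle g
    have h2 := cardle g⁻¹
    rw [inv_inv] at h2
    rw [Finset.card_compl, Finset.card_compl, le_antisymm h1 h2]
  let φ : G → A × Bool → A × Bool := fun g b =>
    if g = 1 then b else if b.1 ∈ D g then (ψ g b.1, b.2)
      else (sfTau (D g)ᶜ (D g⁻¹)ᶜ b.1, !b.2)
  have φ1 : ∀ g, g ≠ 1 → ∀ b : A × Bool, b.1 ∈ D g → φ g b = (ψ g b.1, b.2) := by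
    intro g hg b hb; simp only [φ, if_neg hg, if_pos hb]
  have φ2 : ∀ g, g ≠ 1 → ∀ b : A × Bool, b.1 ∉ D g →
      φ g b = (sfTau (D g)ᶜ (D g⁻¹)ᶜ b.1, !b.2) := by
    intro g hg b hb; simp only [φ, if_neg hg, if_neg hb]
  refine ⟨φ, ?_, ?_, ?_, ?_⟩
  · funext b; simp [φ]
  · intro g b
    by_cases hg : g = 1
    · simp [φ, hg]
    have hg' : g⁻¹ ≠ 1 := by simpa using hg
    by_cases hb : b.1 ∈ D g
    · rw [φ1 g hg b hb, φ1 _ hg' _ (mapD g _ hb)]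
      exact Prod.ext ((memD _ _).1 hb).1 rfl
    · have hb' : b.1 ∈ (D g)ᶜ := by simpa using hb
      have h3 := sfTau_mem _ _ (cardeq g) _ hb'
      rw [Finset.mem_compl] at h3
      rw [φ2 g hg b hb, φ2 _ hg' _ h3]
      simp only [inv_inv, Bool.not_not]
      exact Prod.ext (sfTau_tau _ _ (cardeq g) _ hb') rfl
  · intro g hg b h
    by_cases hb : b.1 ∈ D g
    · rw [φ1 g hg b hb] at h
      exact ((memD _ _).1 hb).2 (congrArg Prod.fst h)
    · rw [φ2 g hg b hb] at h
      have := congrArg Prod.snd h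
      simp at this
  · intro g hg a i h1 h2
    exact φ1 g hg (a, i) ((memD g a).2 ⟨h1, h2⟩)

lemma sf_similar_iff {A : Type} [Fintype A] [DecidableEq A] (ε : ℝ) (e f : A → A) :
    EpsSimilar ε e f ↔ ((Finset.univ.filter (fun a => e a ≠ f a)).card : ℝ)
      ≤ ε * Fintype.card A := by
  unfold EpsSimilar
  rw [Nat.card_eq_fintype_card, Fintype.card_subtype]

lemma sf_not_similar {A : Type} [Fintype A] [DecidableEq A] (ε : ℝ) (e f : A → A) :
    ¬ EpsSimilar (1 - ε) e f ↔ ((Finset.univ.filter (fun a => e a = f a)).card : ℝ)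
      < ε * Fintype.card A := by
  rw [sf_similar_iff, not_le]
  have h := Finset.card_filter_add_card_filter_not (s := (Finset.univ : Finset A))
    (fun a => e a = f a)
  have h' : ((Finset.univ.filter (fun a => e a = f a)).card : ℝ) +
      ((Finset.univ.filter (fun a => e a ≠ f a)).card : ℝ) = Fintype.card A := by
    exact_mod_cast h
  constructor <;> intro h2 <;> linarith

/-- Lemma 1 (good quasi-actions): a sofic group admits, for each finite `F` and `ε ∈ (0,1)`,
an `(F,ε)`-quasi-action `φ` such that `φ(1) = id`, for `g ≠ 1` the map `φ(g)` is a fixpoint-free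
bijection, `φ(g⁻¹)` is inverse to `φ(g)`, and distinct elements of `F ∪ {1}` are mapped to
`(1-ε)`-different maps. -/
theorem sofic_exists_good_quasiAction {G : Type*} [Group G] (hG : IsSofic G)
    (F : Finset G) (ε : ℝ) (hε0 : 0 < ε) (hε1 : ε < 1) :
    ∃ (A : Type) (_ : Fintype A) (_ : Nonempty A) (φ : G → A → A),
      IsQuasiAction F ε φ ∧
      φ 1 = id ∧
      (∀ g : G, g ≠ 1 → Function.Bijective (φ g) ∧ ∀ a : A, φ g a ≠ a) ∧
      (∀ g : G, Function.LeftInverse (φ g⁻¹) (φ g) ∧ Function.RightInverse (φ g⁻¹) (φ g)) ∧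
      (∀ e : G, (e ∈ F ∨ e = 1) → ∀ f : G, (f ∈ F ∨ f = 1) → e ≠ f →
        ¬ EpsSimilar (1 - ε) (φ e) (φ f)) := by
  classical
  let F₁ : Finset G := insert 1 (F ∪ F.image (fun g => g⁻¹))
  let F₂ : Finset G := (F₁ ×ˢ F₁).image (fun p => p.1 * p.2)
  have h1F₁ : (1 : G) ∈ F₁ := by simp [F₁]
  have hFF₁ : ∀ g ∈ F, g ∈ F₁ := by intro g hg; simp [F₁, hg]
  have hinv₁ : ∀ g ∈ F₁, g⁻¹ ∈ F₁ := by
    intro g hg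
    simp only [F₁, Finset.mem_insert, Finset.mem_union, Finset.mem_image] at hg ⊢
    rcases hg with rfl | hg | ⟨x, hx, rfl⟩
    · simp
    · exact Or.inr (Or.inr ⟨g, hg, rfl⟩)
    · simp [hx]
  have hmul : ∀ e ∈ F₁, ∀ f ∈ F₁, e * f ∈ F₂ := by
    intro e he f hf
    exact Finset.mem_image.2 ⟨(e, f), Finset.mem_product.2 ⟨he, hf⟩, rfl⟩
  have h12 : ∀ g ∈ F₁, g ∈ F₂ := by
    intro g hg
    simpa using hmul g hg 1 h1F₁
  have hinv₂ : ∀ g ∈ F₂, g⁻¹ ∈ F₂ := by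
    intro g hg
    obtain ⟨⟨e, f⟩, hp, rfl⟩ := Finset.mem_image.1 hg
    obtain ⟨he, hf⟩ := Finset.mem_product.1 hp
    simp only [mul_inv_rev]
    exact hmul _ (hinv₁ f hf) _ (hinv₁ e he)
  obtain ⟨A, iA, nA, ψ, ha, hb, hc⟩ := hG F₂ (ε / 20) (by linarith) (by linarith)
  obtain ⟨φ, hφ1, hφinv, hφfree, hφψ⟩ := sf_construct ψ
  have hri : ∀ g, Function.RightInverse (φ g⁻¹) (φ g) := by
    intro g
    have := hφinv g⁻¹
    rwa [inv_inv] at this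
  have hinj : ∀ g, Function.Injective (φ g) := fun g => (hφinv g).injective
  have hbij : ∀ g, Function.Bijective (φ g) := fun g => ⟨hinj g, (hri g).surjective⟩
  have nn : (0 : ℝ) < Fintype.card A := by exact_mod_cast Fintype.card_pos
  have cB : (Fintype.card (A × Bool) : ℝ) = 2 * Fintype.card A := by
    rw [Fintype.card_prod, Fintype.card_bool]; push_cast; ring
  -- the bad set for `g`
  let Y : G → Finset (A × Bool) := fun g =>
    Finset.univ.filter (fun b => φ g b ≠ (ψ g b.1, b.2))
  have hY : ∀ g ∈ F₂, ((Y g).card : ℝ) ≤ 3 * (ε / 20) * (2 * Fintype.card A) := by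
    intro g hg
    rw [sf_similar_iff] at hb
    by_cases hg1 : g = 1
    · have hsub : Y g ⊆ (Finset.univ.filter (fun a => ψ 1 a ≠ id a)) ×ˢ
          (Finset.univ : Finset Bool) := by
        rintro ⟨a, i⟩ hx
        simp only [Y, hg1, hφ1, Finset.mem_filter, Finset.mem_univ, true_and, id,
          Finset.mem_product, and_true] at hx ⊢
        intro h
        rw [h] at hx
        exact hx rfl
      have h := Finset.card_le_card hsub
      rw [Finset.card_product] at h
      have h' : ((Y g).card : ℝ) ≤ (Finset.univ.filter (fun a => ψ 1 a ≠ id a)).card * 2 := by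
        exact_mod_cast h
      nlinarith
    · have h1 := ha g hg g⁻¹ (hinv₂ g hg)
      have h2 := hc g hg hg1
      rw [sf_similar_iff, mul_inv_cancel] at h1
      rw [sf_not_similar] at h2
      have hsub : Y g ⊆ ((Finset.univ.filter (fun a => ψ 1 a ≠ ψ g⁻¹ (ψ g a))) ∪
          ((Finset.univ.filter (fun a => ψ 1 a ≠ id a)) ∪
          (Finset.univ.filter (fun a => ψ g a = id a)))) ×ˢ (Finset.univ : Finset Bool) := by
        rintro ⟨a, i⟩ hx
        simp only [Y, Finset.mem_filter, Finset.mem_univ, true_and, id,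
          Finset.mem_product, and_true, Finset.mem_union] at hx ⊢
        by_contra! hcon
        obtain ⟨c1, c2, c3⟩ := hcon
        exact hx (hφψ g hg1 a i (c1.symm.trans c2) c3)
      have h := Finset.card_le_card hsub
      rw [Finset.card_product] at h
      have h3 := Finset.card_union_le (Finset.univ.filter (fun a => ψ 1 a ≠ ψ g⁻¹ (ψ g a)))
        ((Finset.univ.filter (fun a => ψ 1 a ≠ id a)) ∪
          (Finset.univ.filter (fun a => ψ g a = id a)))
      have h4 := Finset.card_union_le (Finset.univ.filter (fun a => ψ 1 a ≠ id a))
          (Finset.univ.filter (fun a => ψ g a = id a))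
      have h' : (Y g).card ≤ ((Finset.univ.filter (fun a => ψ 1 a ≠ ψ g⁻¹ (ψ g a))).card +
        ((Finset.univ.filter (fun a => ψ 1 a ≠ id a)).card +
          (Finset.univ.filter (fun a => ψ g a = id a)).card)) * 2 := by
        simp only [Finset.card_univ, Fintype.card_bool] at h
        omega
      have h'' : ((Y g).card : ℝ) ≤
        (((Finset.univ.filter (fun a => ψ 1 a ≠ ψ g⁻¹ (ψ g a))).card : ℝ) +
        (((Finset.univ.filter (fun a => ψ 1 a ≠ id a)).card : ℝ) +
          ((Finset.univ.filter (fun a => ψ g a = id a)).card : ℝ))) * 2 := by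
        exact_mod_cast h'
      linarith
  have key : ∀ e ∈ F₁, ∀ f ∈ F₁,
      ((Finset.univ.filter (fun b => φ (e * f) b ≠ φ f (φ e b))).card : ℝ)
        ≤ ε / 2 * Fintype.card (A × Bool) := by
    intro e he f hf
    have h0 := ha e (h12 e he) f (h12 f hf)
    rw [sf_similar_iff] at h0
    have y1 := hY _ (hmul e he f hf)
    have y2 := hY _ (h12 e he)
    have y3 := hY _ (h12 f hf)
    let Z : Finset (A × Bool) := Finset.univ.filter (fun b => φ e b ∈ Y f)
    have hZ : Z.card ≤ (Y f).card := by
      refine Finset.card_le_card_of_injOn (φ e) (fun b hb => ?_) (hinj e).injOn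
      exact (Finset.mem_filter.1 hb).2
    let W : Finset (A × Bool) := (Finset.univ.filter (fun a => ψ (e * f) a ≠ ψ f (ψ e a))) ×ˢ
      (Finset.univ : Finset Bool)
    have hW : W.card = (Finset.univ.filter (fun a => ψ (e * f) a ≠ ψ f (ψ e a))).card * 2 := by
      simp only [W, Finset.card_product, Finset.card_univ, Fintype.card_bool]
    have hsub : Finset.univ.filter (fun b => φ (e * f) b ≠ φ f (φ e b)) ⊆
        (Y (e * f) ∪ Y e) ∪ (Z ∪ W) := by
      rintro ⟨a, i⟩ hx
      simp only [Y, Z, W, Finset.mem_filter, Finset.mem_univ, true_and,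
          Finset.mem_product, and_true, Finset.mem_union] at hx ⊢
      by_contra! hcon
      obtain ⟨⟨c1, c2⟩, c3, c4⟩ := hcon
      apply hx
      rw [c3, c1, c2, c4]
    have h := Finset.card_le_card hsub
    have u1 := Finset.card_union_le (Y (e * f) ∪ Y e) (Z ∪ W)
    have u2 := Finset.card_union_le (Y (e * f)) (Y e)
    have u3 := Finset.card_union_le Z W
    have h' : (Finset.univ.filter (fun b => φ (e * f) b ≠ φ f (φ e b))).card ≤
        (Y (e * f)).card + (Y e).card + (Y f).card +
        (Finset.univ.filter (fun a => ψ (e * f) a ≠ ψ f (ψ e a))).card * 2 := by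
      omega
    have h'' : ((Finset.univ.filter (fun b => φ (e * f) b ≠ φ f (φ e b))).card : ℝ) ≤
        (Y (e * f)).card + (Y e).card + (Y f).card +
        (Finset.univ.filter (fun a => ψ (e * f) a ≠ ψ f (ψ e a))).card * 2 := by
      exact_mod_cast h'
    rw [cB]
    linarith
  have εn : 0 < ε * Fintype.card A := mul_pos hε0 nn
  refine ⟨A × Bool, inferInstance, inferInstance, φ, ⟨?_, ?_, ?_⟩, hφ1,
    fun g hg => ⟨hbij g, hφfree g hg⟩, fun g => ⟨hφinv g, hri g⟩, ?_⟩
  · intro e he f hf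
    rw [sf_similar_iff]
    have := key e (hFF₁ e he) f (hFF₁ f hf)
    rw [cB] at this ⊢
    linarith
  · rw [sf_similar_iff, hφ1, cB]
    simp only [ne_eq, not_true_eq_false, Finset.filter_false, Finset.card_empty, Nat.cast_zero]
    linarith
  · intro e _ he1
    rw [sf_not_similar, cB]
    simp only [id, hφfree e he1, Finset.filter_false, Finset.card_empty, Nat.cast_zero]
    linarith
  · intro e he f hf hef
    have he' : e ∈ F₁ := by
      rcases he with h | rfl
      exacts [hFF₁ _ h, h1F₁]
    have hf' : f ∈ F₁ := by
      rcases hf with h | rfl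
      exacts [hFF₁ _ h, h1F₁]
    have hk := key e he' f⁻¹ (hinv₁ f hf')
    rw [sf_not_similar]
    have hsub : Finset.univ.filter (fun b => φ e b = φ f b) ⊆
        Finset.univ.filter (fun b => φ (e * f⁻¹) b ≠ φ f⁻¹ (φ e b)) := by
      intro b hx
      simp only [Finset.mem_filter, Finset.mem_univ, true_and] at hx ⊢
      rw [hx, hφinv f b]
      exact hφfree _ (fun h => hef (mul_inv_eq_one.1 h)) b
    have h : ((Finset.univ.filter (fun b => φ e b = φ f b)).card : ℝ) ≤
        ((Finset.univ.filter (fun b => φ (e * f⁻¹) b ≠ φ f⁻¹ (φ e b))).card : ℝ) := by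
      exact_mod_cast Finset.card_le_card hsub
    rw [cB] at hk ⊢
    linarith
end

section
/- Let {G_i}_{i∈I} be a family of sofic groups (over an arbitrary index set I). Then the direct product G = ∏_{i∈I} G_i is sofic. -/
lemma sofic_card_coord {J : Type} [Fintype J] [DecidableEq J] (A : J → Type)
    [∀ j, Fintype (A j)] (j : J) (P : A j → Prop) :
    Nat.card {a : ∀ j, A j // P (a j)} * Fintype.card (A j)
      = Nat.card {x : A j // P x} * Fintype.card (∀ j, A j) := by
  have e1 : {a : ∀ j, A j // P (a j)} ≃ {x : A j // P x} × (∀ k : {k // k ≠ j}, A k) :=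
    ((Equiv.piSplitAt j A).subtypeEquiv (q := fun p => P p.1) (fun a => by simp [Equiv.piSplitAt])).trans
      (Equiv.prodSubtypeFstEquivSubtypeProd (p := P))
  rw [Nat.card_congr e1, Nat.card_prod, ← Nat.card_eq_fintype_card (α := ∀ j, A j),
    Nat.card_congr (Equiv.piSplitAt j A), Nat.card_prod, Nat.card_eq_fintype_card (α := A j)]
  ring

lemma sofic_similar {J : Type} [Fintype J] [DecidableEq J] (A : J → Type)
    [∀ j, Fintype (A j)] [∀ j, Nonempty (A j)] (δ ε : ℝ) (hδ : Fintype.card J * δ ≤ ε)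
    (e f : ∀ j, A j → A j) (h : ∀ j, EpsSimilar δ (e j) (f j)) :
    EpsSimilar ε (fun (a : ∀ j, A j) j => e j (a j)) (fun a j => f j (a j)) := by
  classical
  unfold EpsSimilar at *
  have h1 : ∀ j, (Nat.card {a : ∀ j, A j // e j (a j) ≠ f j (a j)} : ℝ)
      ≤ δ * Fintype.card (∀ j, A j) := by
    intro j
    have hc := sofic_card_coord A j (fun x => e j x ≠ f j x)
    have hc' : (Nat.card {a : ∀ j, A j // e j (a j) ≠ f j (a j)} : ℝ) * Fintype.card (A j)
      = Nat.card {x : A j // e j x ≠ f j x} * Fintype.card (∀ j, A j) := by exact_mod_cast hc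
    have hp : (0:ℝ) < Fintype.card (A j) := by exact_mod_cast Fintype.card_pos
    refine le_of_mul_le_mul_right ?_ hp
    rw [hc']
    calc _ ≤ (δ * Fintype.card (A j)) * (Fintype.card (∀ j, A j) : ℝ) :=
          mul_le_mul_of_nonneg_right (h j) (Nat.cast_nonneg _)
      _ = _ := by ring
  have h2 : Nat.card {a : ∀ j, A j // (fun j => e j (a j)) ≠ (fun j => f j (a j))}
      ≤ ∑ j, Nat.card {a : ∀ j, A j // e j (a j) ≠ f j (a j)} := by
    rw [← Nat.card_sigma]
    have hx : ∀ x : {a : ∀ j, A j // (fun j => e j (a j)) ≠ (fun j => f j (a j))},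
        ∃ j, e j (x.1 j) ≠ f j (x.1 j) := fun x => Function.ne_iff.mp x.2
    choose g hg using hx
    refine Nat.card_le_card_of_injective
      (fun x => (⟨g x, ⟨x.1, hg x⟩⟩ : Σ j, {a : ∀ j, A j // e j (a j) ≠ f j (a j)})) ?_
    intro x y hxy
    have := congrArg (fun z : (Σ j, {a : ∀ j, A j // e j (a j) ≠ f j (a j)}) => z.2.1) hxy
    exact Subtype.ext this
  calc (Nat.card {a : ∀ j, A j // (fun j => e j (a j)) ≠ (fun j => f j (a j))} : ℝ)
      ≤ ∑ j, (Nat.card {a : ∀ j, A j // e j (a j) ≠ f j (a j)} : ℝ) := by exact_mod_cast h2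
    _ ≤ ∑ j : J, δ * Fintype.card (∀ j, A j) := Finset.sum_le_sum fun j _ => h1 j
    _ = (Fintype.card J * δ) * Fintype.card (∀ j, A j) := by
        rw [Finset.sum_const, Finset.card_univ, nsmul_eq_mul]; ring
    _ ≤ _ := mul_le_mul_of_nonneg_right hδ (Nat.cast_nonneg _)

lemma sofic_different {J : Type} [Fintype J] [DecidableEq J] (A : J → Type)
    [∀ j, Fintype (A j)] [∀ j, Nonempty (A j)] (δ ε : ℝ) (hδ : δ ≤ ε)
    (e : ∀ j, A j → A j) (j : J) (h : ¬ EpsSimilar (1 - δ) (e j) id) :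
    ¬ EpsSimilar (1 - ε) (fun (a : ∀ j, A j) j => e j (a j)) id := by
  classical
  unfold EpsSimilar at *
  intro H
  apply h
  have hc := sofic_card_coord A j (fun x => e j x ≠ id x)
  have hc' : (Nat.card {a : ∀ j, A j // e j (a j) ≠ id (a j)} : ℝ) * Fintype.card (A j)
      = Nat.card {x : A j // e j x ≠ id x} * Fintype.card (∀ j, A j) := by exact_mod_cast hc
  have hp : (0:ℝ) < Fintype.card (∀ j, A j) := by exact_mod_cast Fintype.card_pos
  have h2 : Nat.card {a : ∀ j, A j // e j (a j) ≠ id (a j)}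
      ≤ Nat.card {a : ∀ j, A j // (fun j => e j (a j)) ≠ id a} := by
    refine Nat.card_le_card_of_injective (fun x => ⟨x.1, fun hh => x.2 (congrFun hh j)⟩) ?_
    intro x y hxy
    have hv := Subtype.mk.inj hxy
    exact Subtype.ext hv
  have h2' : (Nat.card {a : ∀ j, A j // e j (a j) ≠ id (a j)} : ℝ)
      ≤ (1 - δ) * Fintype.card (∀ j, A j) := by
    refine (Nat.cast_le.mpr h2).trans (H.trans ?_)
    exact mul_le_mul_of_nonneg_right (by linarith) hp.le
  refine le_of_mul_le_mul_right ?_ hp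
  rw [← hc']
  calc _ ≤ ((1 - δ) * Fintype.card (∀ j, A j)) * (Fintype.card (A j) : ℝ) :=
        mul_le_mul_of_nonneg_right h2' (Nat.cast_nonneg _)
    _ = _ := by ring

/-- The direct product of an arbitrary family of sofic groups is sofic. -/
theorem isSofic_pi {I : Type*} (G : I → Type*) [∀ i, Group (G i)]
    (h : ∀ i, IsSofic (G i)) : IsSofic (∀ i, G i) := by
  classical
  intro F ε h0 h1
  -- a finite family of indices detecting the nontrivial elements of `F`
  obtain ⟨n, idx, hidx⟩ : ∃ (n : ℕ) (idx : Fin n → I),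
      ∀ e ∈ F, e ≠ 1 → ∃ k, e (idx k) ≠ 1 := by
    have hx : ∀ e : {e // e ∈ F.filter (· ≠ 1)}, ∃ i, e.1 i ≠ 1 := fun e =>
      Function.ne_iff.mp (Finset.mem_filter.mp e.2).2
    choose g hg using hx
    refine ⟨_, g ∘ (Finset.equivFin (F.filter (· ≠ 1))).symm, fun e he hne => ?_⟩
    refine ⟨Finset.equivFin _ ⟨e, Finset.mem_filter.mpr ⟨he, hne⟩⟩, ?_⟩
    rw [Function.comp_apply, Equiv.symm_apply_apply]
    exact hg ⟨e, Finset.mem_filter.mpr ⟨he, hne⟩⟩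
  have hn : (0:ℝ) < n + 1 := by positivity
  have hn0 : (0:ℝ) ≤ n := by positivity
  have hd0 : 0 < ε / (n + 1) := by positivity
  have hd1 : ε / (n + 1) ≤ ε := div_le_self h0.le (by linarith)
  have hd2 : n * (ε / (n + 1)) ≤ ε := by
    have : (n + 1) * (ε / (n + 1)) = ε := by field_simp
    linarith
  have hq := fun k : Fin n => h (idx k) (F.image (fun e => e (idx k))) (ε / (n + 1)) hd0
    (hd1.trans_lt h1)
  choose A hA hA' φ hφ using hq
  refine ⟨∀ k, A k, inferInstance, inferInstance, fun g a k => φ k (g (idx k)) (a k), ?_, ?_, ?_⟩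
  · intro e he f hf
    exact sofic_similar A _ ε (by simpa using hd2) (fun k => φ k ((e * f) (idx k)))
      (fun k a => φ k (f (idx k)) (φ k (e (idx k)) a))
      (fun k => (hφ k).1 _ (Finset.mem_image_of_mem _ he) _ (Finset.mem_image_of_mem _ hf))
  · exact sofic_similar A _ ε (by simpa using hd2) (fun k => φ k 1) (fun k => id)
      (fun k => (hφ k).2.1)
  · intro e he hne
    obtain ⟨k, hk⟩ := hidx e he hne
    exact sofic_different A _ ε hd1 (fun k => φ k (e (idx k))) k
      ((hφ k).2.2 _ (Finset.mem_image_of_mem _ he) hk)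
end

section
/- If a group G admits an injective group homomorphism into a direct product ∏_{i∈I} G_i of sofic groups G_i, then G is sofic. (In particular, inverse limits of sofic groups are sofic.) -/
theorem card_coord {ι : Type} [Fintype ι] [DecidableEq ι] (A : ι → Type)
    [∀ i, Fintype (A i)] [∀ i, Nonempty (A i)] (j : ι) (P : A j → Prop) (δ : ℝ) :
    (Nat.card {a : ∀ i, A i // P (a j)} : ℝ) ≤ δ * Fintype.card (∀ i, A i) ↔
      (Nat.card {x : A j // P x} : ℝ) ≤ δ * Fintype.card (A j) := by
  classical
  have h1 : Nat.card {a : ∀ i, A i // P (a j)} =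
      Nat.card {x : A j // P x} * Fintype.card (∀ i : {i // i ≠ j}, A i) := by
    rw [← Nat.card_eq_fintype_card, ← Nat.card_prod]
    refine Nat.card_congr (Equiv.trans ?_ Equiv.prodSubtypeFstEquivSubtypeProd)
    exact (Equiv.piSplitAt j A).subtypeEquiv (fun a => by simp [Equiv.piSplitAt])
  have h2 : Fintype.card (∀ i, A i) =
      Fintype.card (A j) * Fintype.card (∀ i : {i // i ≠ j}, A i) := by
    rw [← Fintype.card_prod]
    exact Fintype.card_congr (Equiv.piSplitAt j A)
  have h3 : (0 : ℝ) < Fintype.card (∀ i : {i // i ≠ j}, A i) := by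
    exact_mod_cast Fintype.card_pos
  rw [h1, h2]
  push_cast only [Nat.cast_mul]
  rw [← mul_assoc]
  exact mul_le_mul_iff_left₀ h3

theorem card_union {ι : Type} [Fintype ι] [DecidableEq ι] (A : ι → Type)
    [∀ i, Fintype (A i)] [∀ i, Nonempty (A i)] (u v : ∀ i, A i → A i) (δ ε : ℝ)
    (hδ : Fintype.card ι * δ ≤ ε) (h : ∀ i, EpsSimilar δ (u i) (v i)) :
    EpsSimilar ε (fun (a : ∀ i, A i) i => u i (a i)) (fun a i => v i (a i)) := by
  classical
  unfold EpsSimilar at *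
  have key : Nat.card {a : ∀ i, A i // (fun i => u i (a i)) ≠ (fun i => v i (a i))} ≤
      ∑ j, Nat.card {a : ∀ i, A i // u j (a j) ≠ v j (a j)} := by
    simp only [Nat.card_eq_fintype_card, Fintype.card_subtype]
    refine le_trans (Finset.card_le_card ?_) Finset.card_biUnion_le
    intro a ha
    simpa [funext_iff] using ha
  calc (Nat.card {a : ∀ i, A i // (fun i => u i (a i)) ≠ (fun i => v i (a i))} : ℝ)
      ≤ ∑ j, (Nat.card {a : ∀ i, A i // u j (a j) ≠ v j (a j)} : ℝ) := by exact_mod_cast key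
    _ ≤ ∑ _j : ι, δ * Fintype.card (∀ i, A i) :=
        Finset.sum_le_sum fun j _ => (card_coord A j (fun x => u j x ≠ v j x) δ).2 (h j)
    _ = (Fintype.card ι * δ) * Fintype.card (∀ i, A i) := by
        rw [Finset.sum_const, Finset.card_univ, nsmul_eq_mul, mul_assoc]
    _ ≤ ε * Fintype.card (∀ i, A i) := by gcongr

/-- If a group embeds (via an injective group homomorphism) into a direct product of sofic
groups, then it is sofic. -/
theorem isSofic_of_injective_hom_pi {G : Type*} [Group G] {I : Type*} (Gi : I → Type*)
    [∀ i, Group (Gi i)] (h : ∀ i, IsSofic (Gi i)) (f : G →* (∀ i, Gi i))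
    (hf : Function.Injective f) : IsSofic G := by
  classical
  intro F ε h0 h1
  let J := {g : G // g ∈ F ∧ g ≠ 1}
  haveI : Finite J := Set.Finite.subset F.finite_toSet (fun g hg => hg.1)
  obtain ⟨n, ⟨eq⟩⟩ := Finite.exists_equiv_fin J
  have hidx : ∀ k : Fin n, ∃ i, f (eq.symm k).1 i ≠ 1 := by
    intro k
    by_contra! hc
    exact (eq.symm k).2.2 (hf (by rw [map_one]; exact funext hc))
  choose idx hidx using hidx
  have hn : (0 : ℝ) < n + 1 := by positivity
  have hδ0 : 0 < ε / (n + 1) := by positivity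
  have hδle : ε / (n + 1) ≤ ε := div_le_self h0.le (by simp)
  have hnδ : (Fintype.card (Fin n) : ℝ) * (ε / (n + 1)) ≤ ε := by
    rw [Fintype.card_fin, ← mul_div_assoc, div_le_iff₀ hn]
    nlinarith
  have hq := fun k : Fin n => h (idx k) (F.image fun g => f g (idx k)) (ε / (n + 1)) hδ0
    (lt_of_le_of_lt hδle h1)
  choose A hA hN φ hφ using hq
  refine ⟨∀ k, A k, inferInstance, inferInstance,
    fun g a k => φ k (f g (idx k)) (a k), ?_, ?_, ?_⟩
  · intro x hx y hy
    refine card_union A (fun k => φ k (f (x * y) (idx k)))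
      (fun k a => φ k (f y (idx k)) (φ k (f x (idx k)) a)) _ _ hnδ fun k => ?_
    rw [map_mul, Pi.mul_apply]
    exact (hφ k).1 _ (Finset.mem_image_of_mem _ hx) _ (Finset.mem_image_of_mem _ hy)
  · refine card_union A (fun k => φ k (f 1 (idx k))) (fun k => id) _ _ hnδ fun k => ?_
    rw [map_one, Pi.one_apply]
    exact (hφ k).2.1
  · intro x hx hx1 hs
    obtain ⟨k, hk⟩ : ∃ k, (eq.symm k).1 = x := ⟨eq ⟨x, hx, hx1⟩, by simp⟩
    have hne := hidx k
    rw [hk] at hne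
    refine (hφ k).2.2 _ (Finset.mem_image_of_mem _ hx) hne ?_
    refine (card_coord A k (fun a => φ k (f x (idx k)) a ≠ id a) _).1 ?_
    unfold EpsSimilar at hs
    have hle : Nat.card {a : ∀ k, A k // φ k (f x (idx k)) (a k) ≠ id (a k)} ≤
        Nat.card {a : ∀ k, A k // (fun k => φ k (f x (idx k)) (a k)) ≠ id a} := by
      refine Nat.card_le_card_of_injective
        (Subtype.map id fun a ha hc => ha (congrFun hc k)) ?_
      exact Subtype.map_injective _ Function.injective_id
    calc _ ≤ (Nat.card {a : ∀ k, A k // (fun k => φ k (f x (idx k)) (a k)) ≠ id a} : ℝ) := by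
          exact_mod_cast hle
      _ ≤ _ := hs
      _ ≤ _ := by gcongr
end

section
/- If every finitely generated subgroup of a group G is sofic, then G is sofic. (In particular, the class of sofic groups is closed under direct limits.) -/
/-- If every finitely generated subgroup of `G` is sofic, then `G` is sofic. -/
theorem isSofic_of_fg_subgroups {G : Type*} [Group G]
    (h : ∀ H : Subgroup G, H.FG → IsSofic H) : IsSofic G := by
  classical
  intro F ε h0 h1
  let H : Subgroup G := Subgroup.closure (F : Set G)
  have hF : ∀ g ∈ F, g ∈ H := fun g hg => Subgroup.subset_closure hg
  obtain ⟨A, iA, nA, ψ, ha, hb, hc⟩ := h H ⟨F, rfl⟩ (F.subtype (· ∈ H)) ε h0 h1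
  let φ : G → A → A := fun g => if hg : g ∈ H then ψ ⟨g, hg⟩ else id
  have key : ∀ x : H, φ (x : G) = ψ x := fun x => dif_pos x.2
  refine ⟨A, iA, nA, φ, ?_, ?_, ?_⟩
  · intro e he f hf
    have := ha ⟨e, hF e he⟩ (Finset.mem_subtype.2 he) ⟨f, hF f hf⟩ (Finset.mem_subtype.2 hf)
    rw [← key, ← key, ← key] at this
    exact this
  · rw [← key] at hb
    exact hb
  · intro e he hne
    have := hc ⟨e, hF e he⟩ (Finset.mem_subtype.2 he) (fun h => hne (congrArg Subtype.val h))
    rw [← key] at this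
    exact this
end

section
/- Let G and H be sofic groups. Then the free product G ∗ H is sofic. -/
/-- A point at which a candidate quasi-action behaves like a free action on `F`. -/
def GoodPt {G : Type*} [Group G] (F : Finset G) {A : Type*} (φ : G → A → A) (a : A) : Prop :=
  (∀ e ∈ F, ∀ f ∈ F, φ (e * f) a = φ f (φ e a)) ∧ φ 1 a = a ∧ (∀ e ∈ F, e ≠ 1 → φ e a ≠ a)

/-- Pointwise reformulation of soficity. -/
def SoficPt (G : Type*) [Group G] : Prop :=
  ∀ (F : Finset G) (ε : ℝ), 0 < ε →
    ∃ (A : Type) (_ : Fintype A) (_ : Nonempty A) (φ : G → A → A),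
      (Nat.card {a : A // ¬ GoodPt F φ a} : ℝ) < ε * Fintype.card A

theorem natCard_mono {A : Type*} [Fintype A] {p q : A → Prop} (h : ∀ a, p a → q a) :
    (Nat.card {a // p a} : ℝ) ≤ Nat.card {a // q a} := by
  exact_mod_cast Nat.card_le_card_of_injective (fun a : {a // p a} => (⟨a.1, h _ a.2⟩ : {a // q a}))
    (fun a b hab => by simpa [Subtype.ext_iff] using hab)

theorem natCard_compl {A : Type*} [Fintype A] (p : A → Prop) :
    (Nat.card {a // ¬ p a} : ℝ) = Fintype.card A - Nat.card {a // p a} := by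
  classical
  have := Fintype.card_subtype_compl p
  have h2 := Fintype.card_subtype_le p
  rw [Nat.card_eq_fintype_card, Nat.card_eq_fintype_card, this, Nat.cast_sub h2]

theorem SoficPt.isSofic {G : Type*} [Group G] (h : SoficPt G) : IsSofic G := by
  intro F ε h0 h1
  obtain ⟨A, _, hne, φ, hφ⟩ := h F ε h0
  refine ⟨A, inferInstance, hne, φ, ?_, ?_, ?_⟩
  · intro e he f hf
    refine (natCard_mono ?_).trans hφ.le
    intro a ha hg
    exact ha (hg.1 e he f hf)
  · refine (natCard_mono ?_).trans hφ.le
    intro a ha hg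
    exact ha hg.2.1
  · intro e he hne hs
    unfold EpsSimilar at hs
    have h3 : (Nat.card {a : A // GoodPt F φ a} : ℝ) ≤ Nat.card {a : A // φ e a ≠ id a} :=
      natCard_mono (fun a ha => ha.2.2 e he hne)
    have := natCard_compl (GoodPt F φ)
    linarith

theorem IsSofic.soficPt {G : Type*} [Group G] (h : IsSofic G) : SoficPt G := by
  classical
  intro F ε h0
  set N : ℝ := (F.card : ℝ) * F.card + 1 + F.card with hN
  have hNpos : 0 < N := by positivity
  set δ := min (1/2) (ε / (2 * N)) with hδ
  have hδ0 : 0 < δ := lt_min (by norm_num) (by positivity)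
  have hδ1 : δ < 1 := (min_le_left _ _).trans_lt (by norm_num)
  have hδ2 : N * δ < ε := by
    have : δ ≤ ε / (2 * N) := min_le_right _ _
    calc N * δ ≤ N * (ε / (2 * N)) := by gcongr
      _ = ε / 2 := by field_simp
      _ < ε := by linarith
  obtain ⟨A, _, hne, φ, hφ1, hφ2, hφ3⟩ := h F δ hδ0 hδ1
  refine ⟨A, inferInstance, hne, φ, ?_⟩
  have hA : (0 : ℝ) < Fintype.card A := by exact_mod_cast Fintype.card_pos
  have hsub : (Finset.univ.filter fun a => ¬ GoodPt F φ a) ⊆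
      ((F ×ˢ F).biUnion fun p => Finset.univ.filter fun a => φ (p.1 * p.2) a ≠ φ p.2 (φ p.1 a)) ∪
      (Finset.univ.filter fun a => φ 1 a ≠ a) ∪
      ((F.filter (· ≠ 1)).biUnion fun e => Finset.univ.filter fun a => φ e a = a) := by
    intro a ha
    rw [Finset.mem_filter] at ha
    have ha := ha.2
    by_contra hc
    apply ha
    simp only [Finset.mem_union, Finset.mem_biUnion, Finset.mem_filter, Finset.mem_univ, true_and,
      Finset.mem_product, not_or, not_exists, not_and, not_not, Prod.forall, and_imp] at hc
    exact ⟨fun e he f hf => hc.1.1 e f he hf, hc.1.2, fun e he h1 => hc.2 e he h1⟩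
  have hc := (Finset.card_le_card hsub).trans
    ((Finset.card_union_le _ _).trans (add_le_add_left (Finset.card_union_le _ _) _))
  have hc' := hc.trans (add_le_add (add_le_add_left Finset.card_biUnion_le _) Finset.card_biUnion_le)
  have hc'' : ((Finset.univ.filter fun a => ¬ GoodPt F φ a).card : ℝ) ≤ _ := Nat.cast_le.2 hc'
  push_cast at hc''
  have e1 : ∑ p ∈ F ×ˢ F, ((Finset.univ.filter fun a => φ (p.1 * p.2) a ≠ φ p.2 (φ p.1 a)).card : ℝ)
      ≤ F.card * F.card * (δ * Fintype.card A) := by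
    refine (Finset.sum_le_card_nsmul _ _ (δ * Fintype.card A) ?_).trans ?_
    · intro p hp
      rw [Finset.mem_product] at hp
      have := hφ1 p.1 hp.1 p.2 hp.2
      unfold EpsSimilar at this
      rwa [Nat.card_eq_fintype_card, Fintype.card_subtype] at this
    · rw [Finset.card_product, nsmul_eq_mul]; push_cast; exact le_rfl
  have e2 : ((Finset.univ.filter fun a => φ 1 a ≠ a).card : ℝ) ≤ δ * Fintype.card A := by
    have := hφ2
    unfold EpsSimilar at this
    rwa [Nat.card_eq_fintype_card, Fintype.card_subtype] at this
  have e3 : ∑ e ∈ F.filter (· ≠ 1), ((Finset.univ.filter fun a => φ e a = a).card : ℝ)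
      ≤ F.card * (δ * Fintype.card A) := by
    refine (Finset.sum_le_card_nsmul _ _ (δ * Fintype.card A) ?_).trans ?_
    · intro e he
      rw [Finset.mem_filter] at he
      have := hφ3 e he.1 he.2
      unfold EpsSimilar at this
      have h4 := natCard_compl (fun a => φ e a = a)
      simp only [id] at this
      have h5 : (Nat.card {a // φ e a = a} : ℝ) ≤ δ * Fintype.card A := by
        have : (1 - δ) * Fintype.card A < (Nat.card {a // ¬ φ e a = a} : ℝ) := not_le.1 this
        linarith
      rwa [Nat.card_eq_fintype_card, Fintype.card_subtype] at h5
    · rw [nsmul_eq_mul]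
      gcongr
      exact Finset.filter_subset _ _
  rw [Nat.card_eq_fintype_card, Fintype.card_subtype]
  calc _ ≤ N * δ * Fintype.card A := by rw [hN]; linarith
    _ < _ := by gcongr

theorem SoficPt.of_injective {G H : Type*} [Group G] [Group H] (f : G →* H)
    (hf : Function.Injective f) (h : SoficPt H) : SoficPt G := by
  classical
  intro F ε h0
  obtain ⟨A, _, hne, φ, hφ⟩ := h (F.image f) ε h0
  refine ⟨A, _, hne, fun g => φ (f g), (natCard_mono ?_).trans_lt hφ⟩
  intro a ha hg
  refine ha ⟨?_, ?_, ?_⟩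
  · intro e he e' he'
    change φ (f (e * e')) a = _
    rw [map_mul]
    exact hg.1 _ (Finset.mem_image_of_mem _ he) _ (Finset.mem_image_of_mem _ he')
  · change φ (f 1) a = a
    rw [map_one]; exact hg.2.1
  · intro e he h1
    exact hg.2.2 _ (Finset.mem_image_of_mem _ he) (by rwa [Ne, map_eq_one_iff f hf])

theorem SoficPt.prod {G H : Type*} [Group G] [Group H] (hG : SoficPt G) (hH : SoficPt H) :
    SoficPt (G × H) := by
  classical
  intro F ε h0
  obtain ⟨A, _, hneA, φ, hφ⟩ := hG (F.image Prod.fst) (ε / 2) (by linarith)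
  obtain ⟨B, _, hneB, ψ, hψ⟩ := hH (F.image Prod.snd) (ε / 2) (by linarith)
  refine ⟨A × B, inferInstance, inferInstance, fun p x => (φ p.1 x.1, ψ p.2 x.2), ?_⟩
  have hA : (0 : ℝ) < Fintype.card A := by exact_mod_cast Fintype.card_pos
  have hB : (0 : ℝ) < Fintype.card B := by exact_mod_cast Fintype.card_pos
  rw [Nat.card_eq_fintype_card, Fintype.card_subtype] at *
  have hsub : (Finset.univ.filter fun x : A × B =>
      ¬ GoodPt F (fun (p : G × H) (x : A × B) => (φ p.1 x.1, ψ p.2 x.2)) x) ⊆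
      ((Finset.univ.filter fun a => ¬ GoodPt (F.image Prod.fst) φ a) ×ˢ Finset.univ) ∪
      (Finset.univ ×ˢ (Finset.univ.filter fun b => ¬ GoodPt (F.image Prod.snd) ψ b)) := by
    rintro ⟨a, b⟩ hx
    simp only [Finset.mem_union, Finset.mem_product, Finset.mem_filter, Finset.mem_univ, true_and,
      and_true] at hx ⊢
    by_contra hc
    push Not at hc
    obtain ⟨ha, hb⟩ := hc
    refine hx ⟨?_, ?_, ?_⟩
    · intro e he f hf
      exact Prod.ext (ha.1 _ (Finset.mem_image_of_mem _ he) _ (Finset.mem_image_of_mem _ hf))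
        (hb.1 _ (Finset.mem_image_of_mem _ he) _ (Finset.mem_image_of_mem _ hf))
    · exact Prod.ext ha.2.1 hb.2.1
    · intro e he h1 h2
      rw [Prod.ext_iff] at h2
      apply h1
      by_contra hne
      by_cases h3 : e.1 = 1
      · have h4 : e.2 ≠ 1 := fun h4 => hne (Prod.ext h3 h4)
        exact hb.2.2 _ (Finset.mem_image_of_mem _ he) h4 h2.2
      · exact ha.2.2 _ (Finset.mem_image_of_mem _ he) h3 h2.1
  have hc := (Finset.card_le_card hsub).trans (Finset.card_union_le _ _)
  rw [Finset.card_product, Finset.card_product, Finset.card_univ, Finset.card_univ] at hc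
  have hc' := (Nat.cast_le (α := ℝ)).2 hc
  push_cast at hc'
  rw [Fintype.card_prod]
  push_cast
  nlinarith

/-! ### Finite quotients of free groups -/

theorem exists_perm_extend {Γ : Type*} [Group Γ] (V : Finset Γ) (x : Γ) :
    ∃ σ : Equiv.Perm V, ∀ v : V, ∀ h : x * v ∈ V, σ v = ⟨x * v, h⟩ := by
  classical
  let e : {v : V // x * v ∈ V} ≃ {v : V // x⁻¹ * v ∈ V} :=
    { toFun := fun v => ⟨⟨x * v.1, v.2⟩, by simp⟩
      invFun := fun v => ⟨⟨x⁻¹ * v.1, v.2⟩, by simp⟩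
      left_inv := fun v => by simp
      right_inv := fun v => by simp }
  refine ⟨e.extendSubtype, fun v h => ?_⟩
  rw [Equiv.extendSubtype_apply_of_mem e v h]
  rfl

theorem freeGroup_separate {α : Type} (W : Finset (FreeGroup α)) :
    ∃ (K : Type) (_ : Group K) (_ : Fintype K) (f : FreeGroup α →* K),
      ∀ w ∈ W, w ≠ 1 → f w ≠ 1 := by
  classical
  let V : Finset (FreeGroup α) :=
    insert 1 (W.biUnion fun w => (w.toWord.tails.map FreeGroup.mk).toFinset)
  choose σ hσ using fun x : α => exists_perm_extend V (FreeGroup.of x)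
  have h1V : (1 : FreeGroup α) ∈ V := Finset.mem_insert_self _ _
  have hσ' : ∀ (x : α) (v : V) (h : (FreeGroup.of x)⁻¹ * v ∈ V),
      (σ x)⁻¹ v = ⟨(FreeGroup.of x)⁻¹ * v, h⟩ := by
    intro x v h
    rw [Equiv.Perm.inv_eq_iff_eq, hσ x ⟨_, h⟩ (by simp)]
    simp
  have key : ∀ L : List (α × Bool), (∀ l, l <:+ L → FreeGroup.mk l ∈ V) →
      ((FreeGroup.lift σ (FreeGroup.mk L) ⟨1, h1V⟩ : V) : FreeGroup α) = FreeGroup.mk L := by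
    intro L
    induction L with
    | nil => intro _; rfl
    | cons p L ih =>
      intro hL
      obtain ⟨x, b⟩ := p
      have ih' := ih (fun l hl => hL l (hl.trans (List.suffix_cons _ _)))
      have hm : FreeGroup.mk ((x, b) :: L) = FreeGroup.mk [(x, b)] * FreeGroup.mk L := by
        simp
      have hV := hL _ (List.suffix_refl _)
      rw [hm] at hV ⊢
      rw [map_mul, Equiv.Perm.mul_apply]
      cases b with
      | true =>
        have : FreeGroup.lift σ (FreeGroup.mk [(x, true)]) = σ x := by simp
        rw [this, hσ x _ (by rw [ih']; exact hV)]
        simp only [ih']; rfl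
      | false =>
        have : FreeGroup.lift σ (FreeGroup.mk [(x, false)]) = (σ x)⁻¹ := by simp
        have h2 : FreeGroup.mk [(x, false)] = (FreeGroup.of x)⁻¹ := rfl
        rw [h2] at hV ⊢
        rw [← h2, this, hσ' x _ (by rw [ih']; exact hV)]
        simp only [ih']; rfl
  refine ⟨Equiv.Perm V, inferInstance, inferInstance, FreeGroup.lift σ, ?_⟩
  intro w hw h1 h2
  have := key w.toWord (fun l hl => by
    refine Finset.mem_insert_of_mem (Finset.mem_biUnion.2 ⟨w, hw, ?_⟩)
    rw [List.mem_toFinset, List.mem_map]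
    exact ⟨l, by simpa using hl, rfl⟩)
  rw [FreeGroup.mk_toWord, h2] at this
  exact h1 this.symm

/-! ### The semidirect product of a free group on `P` with `P` -/

/-- The letters of an element of a free group. -/
noncomputable def letters {α : Type*} (x : FreeGroup α) : Finset α :=
  open Classical in (x.toWord.map Prod.fst).toFinset

theorem map_congr_letters {α β : Type*} (x : FreeGroup α) (f g : α → β)
    (h : ∀ a ∈ letters x, f a = g a) : FreeGroup.map f x = FreeGroup.map g x := by
  classical
  rw [← FreeGroup.mk_toWord (x := x), FreeGroup.map.mk, FreeGroup.map.mk]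
  congr 1
  apply List.map_congr_left
  intro p hp
  rw [h p.1]
  unfold letters
  rw [List.mem_toFinset, List.mem_map]
  exact ⟨p, by convert hp, rfl⟩

/-- Left translation action on the free group. -/
def transl (P : Type*) [Group P] : P →* MulAut (FreeGroup P) where
  toFun p := FreeGroup.freeGroupCongr (Equiv.mulLeft p)
  map_one' := by
    ext x
    simp
  map_mul' p q := by
    apply MulEquiv.toMonoidHom_injective
    ext x
    simp [mul_assoc]

theorem transl_apply {P : Type*} [Group P] (p : P) (x : FreeGroup P) :
    transl P p x = FreeGroup.map (fun y => p * y) x := rfl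

theorem SoficPt.semidirect {P : Type*} [Group P] (hP : SoficPt P) :
    SoficPt (FreeGroup P ⋊[transl P] P) := by
  classical
  intro F ε h0
  let S : Finset P := F.image (fun γ => γ.right) ∪ F.biUnion (fun γ => letters γ.left)
  let T : Finset P := S ∪ S.image (·⁻¹) ∪ (S ×ˢ S).image (fun p => p.1 * p.2⁻¹)
  have hST : S ⊆ T := fun x hx => by simp only [T, Finset.mem_union]; tauto
  have hT2 : ∀ x ∈ S, x⁻¹ ∈ T := fun x hx => by
    simp only [T, Finset.mem_union, Finset.mem_image]; exact Or.inl (Or.inr ⟨x, hx, rfl⟩)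
  have hT3 : ∀ x ∈ S, ∀ y ∈ S, x * y⁻¹ ∈ T := fun x hx y hy => by
    simp only [T, Finset.mem_union, Finset.mem_image]
    exact Or.inr ⟨(x, y), Finset.mem_product.2 ⟨hx, hy⟩, rfl⟩
  have hr : ∀ γ ∈ F, γ.right ∈ S := fun γ hγ =>
    Finset.mem_union_left _ (Finset.mem_image_of_mem _ hγ)
  have hl : ∀ γ ∈ F, ∀ x ∈ letters γ.left, x ∈ S := fun γ hγ x hx =>
    Finset.mem_union_right _ (Finset.mem_biUnion.2 ⟨γ, hγ, hx⟩)
  obtain ⟨A, _, hneA, φ, hφ⟩ := hP T ε h0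
  let ev : A → FreeGroup P →* FreeGroup A := fun a => FreeGroup.map (fun x => φ x a)
  obtain ⟨K, _, _, π, hπ⟩ := freeGroup_separate
    ((Finset.univ ×ˢ F).image fun q : A × (FreeGroup P ⋊[transl P] P) => ev q.1 q.2.left)
  let Φ : (FreeGroup P ⋊[transl P] P) → A × K → A × K :=
    fun γ x => (φ γ.right x.1, x.2 * π (ev x.1 γ.left))
  have hgood : ∀ a k, GoodPt T φ a → GoodPt F Φ (a, k) := by
    intro a k ha
    refine ⟨?_, ?_, ?_⟩
    · intro e he f hf
      refine Prod.ext (ha.1 _ (hST (hr e he)) _ (hST (hr f hf))) ?_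
      have : ev a (transl P e.right f.left) = ev (φ e.right a) f.left := by
        simp only [ev, transl_apply]
        rw [FreeGroup.map.comp]
        apply map_congr_letters
        intro x hx
        exact ha.1 _ (hST (hr e he)) _ (hST (hl f hf x hx))
      simp only [Φ, SemidirectProduct.mul_left, map_mul, this, mul_assoc]
    · refine Prod.ext ha.2.1 ?_
      simp [Φ]
    · intro e he hne heq
      have h1 : φ e.right a = a := congrArg Prod.fst heq
      have h2 : k * π (ev a e.left) = k := congrArg Prod.snd heq
      have h3 : e.right = 1 := by
        by_contra h3
        exact ha.2.2 _ (hST (hr e he)) h3 h1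
      have h4 : e.left ≠ 1 := fun h4 => hne (SemidirectProduct.ext h4 h3)
      have h5 : π (ev a e.left) = 1 := by simpa using h2
      refine hπ _ (Finset.mem_image.2 ⟨(a, e), by simp [he], rfl⟩) ?_ h5
      intro h6
      have hinj : ∀ x ∈ S, ∀ y ∈ S, φ x a = φ y a → x = y := by
        intro x hx y hy hxy
        by_contra hne
        apply ha.2.2 _ (hT3 x hx y hy) (by rwa [Ne, mul_inv_eq_one])
        rw [ha.1 _ (hST hx) _ (hT2 y hy), hxy, ← ha.1 _ (hST hy) _ (hT2 y hy), mul_inv_cancel,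
          ha.2.1]
      have hinv : ∃ r : A → P, ∀ x ∈ S, r (φ x a) = x :=
        ⟨Function.invFunOn (fun x => φ x a) (S : Set P), fun x hx =>
          Set.InjOn.leftInvOn_invFunOn
            (fun x hx y hy h => hinj x hx y hy h) hx⟩
      obtain ⟨r, hrr⟩ := hinv
      apply h4
      have h7 : FreeGroup.map r (ev a e.left) = e.left := by
        simp only [ev]
        rw [FreeGroup.map.comp]
        conv_rhs => rw [← FreeGroup.map.id e.left]
        apply map_congr_letters
        intro x hx
        exact hrr x (hl e he x hx)
      rw [← h7, h6, map_one]
  refine ⟨A × K, inferInstance, inferInstance, Φ, ?_⟩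
  have hK : (0 : ℝ) < Fintype.card K := by exact_mod_cast Fintype.card_pos
  rw [Nat.card_eq_fintype_card, Fintype.card_subtype] at *
  have hsub : (Finset.univ.filter fun x : A × K => ¬ GoodPt F Φ x) ⊆
      ((Finset.univ.filter fun a => ¬ GoodPt T φ a) ×ˢ Finset.univ) := by
    rintro ⟨a, k⟩ hx
    simp only [Finset.mem_product, Finset.mem_filter, Finset.mem_univ, true_and,
      and_true] at hx ⊢
    exact fun h => hx (hgood a k h)
  have hc := Finset.card_le_card hsub
  rw [Finset.card_product, Finset.card_univ] at hc
  have hc' := (Nat.cast_le (α := ℝ)).2 hc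
  push_cast at hc'
  rw [Fintype.card_prod]
  push_cast
  nlinarith

/-! ### Embedding the free product -/

section embed

variable {G H : Type*} [Group G] [Group H]

open Monoid

/-- The action of `G × H` on `(G ∗ H) × H`. -/
def actProd (G H : Type*) [Group G] [Group H] :
    G × H →* Equiv.Perm (Coprod G H × H) where
  toFun p :=
    { toFun := fun x => (Coprod.inl p.1 * x.1, p.2 * x.2)
      invFun := fun x => ((Coprod.inl p.1)⁻¹ * x.1, p.2⁻¹ * x.2)
      left_inv := fun x => by simp
      right_inv := fun x => by simp }
  map_one' := by ext x <;> simp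
  map_mul' p q := by ext x <;> simp [mul_assoc]

/-- The involution exchanging the `H`-part of the first coordinate with the second one. -/
def swapPerm (G H : Type*) [Group G] [Group H] : Equiv.Perm (Coprod G H × H) where
  toFun x := (Coprod.inr x.2 * (Coprod.inr (Coprod.snd x.1))⁻¹ * x.1, Coprod.snd x.1)
  invFun x := (Coprod.inr x.2 * (Coprod.inr (Coprod.snd x.1))⁻¹ * x.1, Coprod.snd x.1)
  left_inv x := by ext <;> simp [mul_assoc]
  right_inv x := by ext <;> simp [mul_assoc]

/-- Left multiplication on the first coordinate. -/
def leftMul (G H : Type*) [Group G] [Group H] :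
    Coprod G H →* Equiv.Perm (Coprod G H × H) where
  toFun w :=
    { toFun := fun x => (w * x.1, x.2)
      invFun := fun x => (w⁻¹ * x.1, x.2)
      left_inv := fun x => by simp
      right_inv := fun x => by simp }
  map_one' := by ext x <;> simp
  map_mul' p q := by ext x <;> simp [mul_assoc]

/-- The representation of the semidirect product. -/
def repr₀ (G H : Type*) [Group G] [Group H] :
    FreeGroup (G × H) ⋊[transl (G × H)] (G × H) →* Equiv.Perm (Coprod G H × H) :=
  SemidirectProduct.lift
    (FreeGroup.lift fun p => actProd G H p * swapPerm G H * (actProd G H p)⁻¹)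
    (actProd G H) (by
      intro p
      apply FreeGroup.ext_hom
      intro q
      simp [transl_apply, mul_assoc])

/-- The embedding of the free product. -/
def embed (G H : Type*) [Group G] [Group H] :
    Coprod G H →* FreeGroup (G × H) ⋊[transl (G × H)] (G × H) :=
  Coprod.lift (SemidirectProduct.inr.comp (MonoidHom.inl G H))
    (((MulAut.conj (SemidirectProduct.inl (FreeGroup.of 1))⁻¹).toMonoidHom.comp
      SemidirectProduct.inr).comp (MonoidHom.inr G H))

theorem repr_embed : (repr₀ G H).comp (embed G H) = leftMul G H := by
  apply Coprod.hom_ext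
  · ext g x <;> simp [repr₀, embed, actProd, leftMul]
  · have hs : (swapPerm G H)⁻¹ = swapPerm G H := rfl
    ext h x <;> simp [repr₀, embed, actProd, leftMul, hs] <;> simp [swapPerm, mul_assoc]

theorem embed_injective : Function.Injective (embed G H) := by
  intro v w h
  have h1 : leftMul G H v = leftMul G H w := by
    rw [← repr_embed, MonoidHom.comp_apply, MonoidHom.comp_apply, h]
  have h2 := congrArg (fun σ : Equiv.Perm (Coprod G H × H) => (σ (1, 1)).1) h1
  simpa [leftMul] using h2

end embed

/-- The free product (coproduct in the category of groups) of two sofic groups is sofic. -/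
theorem isSofic_coprod {G H : Type*} [Group G] [Group H]
    (hG : IsSofic G) (hH : IsSofic H) : IsSofic (Monoid.Coprod G H) := by
  exact (SoficPt.of_injective (embed G H) embed_injective
    (hG.soficPt.prod hH.soficPt).semidirect).isSofic
end

section
/- Let {G_i}_{i∈I} be an arbitrary family of sofic groups. Then their free product (the coproduct ∗_{i∈I} G_i in the category of groups) is sofic. -/
namespace SoficAux

open Equiv Filter

/-- Normalized Hamming length of a permutation. -/
noncomputable def len {A : Type*} (σ : Perm A) : ℝ :=
  ({a : A | σ a ≠ a}.ncard : ℝ) / Nat.card A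

lemma len_nonneg {A : Type*} (σ : Perm A) : 0 ≤ len σ := by
  unfold len; positivity

lemma len_one {A : Type*} : len (1 : Perm A) = 0 := by
  simp [len]

lemma len_transport {A B : Type*} (e : A ≃ B) (σ : Perm A) (τ : Perm B)
    (h : ∀ a, τ (e a) = e (σ a)) : len τ = len σ := by
  unfold len
  rw [Nat.card_congr e, ← Set.ncard_image_of_injective _ e.injective]
  congr 3
  ext b
  obtain ⟨a, rfl⟩ := e.surjective b
  simp [h]

lemma len_inv {A : Type*} (σ : Perm A) : len σ⁻¹ = len σ := by
  unfold len
  congr 3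
  ext a
  simp only [Set.mem_ofPred_eq, ne_eq, Perm.inv_eq_iff_eq]
  exact not_congr eq_comm

lemma len_conj {A : Type*} (σ τ : Perm A) : len (τ⁻¹ * σ * τ) = len σ :=
  (len_transport τ _ _ (by intro a; simp)).symm

lemma len_mul_le {A : Type*} [Finite A] (σ τ : Perm A) : len (σ * τ) ≤ len σ + len τ := by
  unfold len
  rw [← add_div]
  gcongr
  rw [← Nat.cast_add, Nat.cast_le]
  refine le_trans (Set.ncard_le_ncard ?_) (Set.ncard_union_le _ _)
  intro a ha
  by_contra hc
  simp only [Set.mem_union, Set.mem_ofPred_eq, not_or, not_not] at hc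
  apply ha
  simp [hc.1, hc.2]

/-- `σ` acting on the first factor. -/
def prodL (A B : Type*) : Perm A →* Perm (A × B) where
  toFun σ := Equiv.prodCongr σ (Equiv.refl B)
  map_one' := by ext <;> simp
  map_mul' σ τ := by ext <;> simp

/-- `σ` acting on the second factor. -/
def prodR (A B : Type*) : Perm B →* Perm (A × B) where
  toFun σ := Equiv.prodCongr (Equiv.refl A) σ
  map_one' := by ext <;> simp
  map_mul' σ τ := by ext <;> simp

@[simp] lemma prodL_apply {A B : Type*} (σ : Perm A) (p : A × B) :
    prodL A B σ p = (σ p.1, p.2) := rfl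

@[simp] lemma prodR_apply {A B : Type*} (σ : Perm B) (p : A × B) :
    prodR A B σ p = (p.1, σ p.2) := rfl

lemma len_prodL {A B : Type*} [Finite B] [Nonempty B] (σ : Perm A) :
    len (prodL A B σ) = len σ := by
  unfold len
  have : {p : A × B | prodL A B σ p ≠ p} = {a | σ a ≠ a} ×ˢ Set.univ := by
    ext ⟨a, b⟩; simp
  rw [this, Set.ncard_prod, Nat.card_prod, Set.ncard_univ]
  have : (Nat.card B : ℝ) ≠ 0 := by exact_mod_cast Nat.card_pos.ne'
  push_cast
  rw [mul_div_mul_right _ _ this]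

lemma len_prodR {A B : Type*} [Finite A] [Nonempty A] (σ : Perm B) :
    len (prodR A B σ) = len σ := by
  rw [← len_prodL (B := A) σ]
  exact len_transport (Equiv.prodComm B A) _ _ (by intro a; simp)

lemma exists_perm_extend {A : Type*} [Finite A] (f : A → A) (S : Set A) (h : Set.InjOn f S) :
    ∃ π : Perm A, ∀ a ∈ S, π a = f a := by
  have := Fintype.ofFinite A
  obtain ⟨g, hg⟩ := Set.MapsTo.exists_equiv_extend_of_card_eq (t := (Finset.univ : Finset A))
    (by simp) (s := S) (f := f) (by intro a _; simp) h
  refine ⟨g.trans (Equiv.subtypeUnivEquiv (by simp)), fun a ha => ?_⟩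
  simpa using hg a ha

/-- Free groups are residually finite, in a form with many words at once. -/
lemma free_sep.{u} {X : Type u} (W : Finset (List (X × Bool))) :
    ∃ (B : Type u) (_ : Finite B) (f : FreeGroup X →* Perm B),
      ∀ l ∈ W, FreeGroup.mk l ≠ 1 → f (FreeGroup.mk l) ≠ 1 := by
  classical
  let S : Set (FreeGroup X) := ⋃ l ∈ W, FreeGroup.mk '' {s | s ∈ l.tails}
  have hS : S.Finite := by
    refine Set.Finite.biUnion W.finite_toSet fun l _ => ?_
    exact (List.finite_toSet _).image _
  have hmem : ∀ l ∈ W, ∀ s, s <:+ l → FreeGroup.mk s ∈ S := by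
    intro l hl s hs
    simp only [S, Set.mem_iUnion]
    exact ⟨l, hl, s, by simpa using hs, rfl⟩
  have : Finite S := hS
  have key : ∀ x : X, ∃ π : Perm S, ∀ b c : S, FreeGroup.of x * b.1 = c.1 → π b = c := by
    intro x
    obtain ⟨π, hπ⟩ := exists_perm_extend
      (fun b : S => if h : FreeGroup.of x * b.1 ∈ S then ⟨_, h⟩ else b)
      {b | FreeGroup.of x * b.1 ∈ S} (by
        intro b hb c hc hbc
        simp only [Set.mem_ofPred_eq] at hb hc
        simp only [hb, hc, dif_pos, Subtype.mk.injEq, mul_right_inj] at hbc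
        exact Subtype.ext hbc)
    refine ⟨π, fun b c hbc => ?_⟩
    have hb : FreeGroup.of x * b.1 ∈ S := hbc ▸ c.2
    rw [hπ b hb]
    simp only [hb, dif_pos]
    exact Subtype.ext hbc
  choose π hπ using key
  refine ⟨S, hS, FreeGroup.lift π, fun l hl hne h1 => hne ?_⟩
  have h0 : (1 : FreeGroup X) ∈ S := hmem l hl [] (List.nil_suffix)
  have main : ∀ s, ∀ hs : s <:+ l,
      FreeGroup.lift π (FreeGroup.mk s) ⟨1, h0⟩ = ⟨FreeGroup.mk s, hmem l hl s hs⟩ := by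
    intro s
    induction s with
    | nil => intro hs; simp [FreeGroup.one_eq_mk]
    | cons p s ih =>
      intro hs
      have hs' : s <:+ l := (List.suffix_cons p s).trans hs
      have ih := ih hs'
      obtain ⟨x, b⟩ := p
      rw [FreeGroup.lift_mk] at ih ⊢
      simp only [List.map_cons, List.prod_cons, Perm.mul_apply]
      rw [ih]
      cases b with
      | true =>
        simp only [cond_true]
        apply hπ
        simp [FreeGroup.of]
      | false =>
        simp only [cond_false, Perm.inv_eq_iff_eq]
        symm
        apply hπ
        have : FreeGroup.mk ((x, false) :: s) = (FreeGroup.of x)⁻¹ * FreeGroup.mk s := by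
          simp [FreeGroup.of, FreeGroup.invRev]
        simp [this]
  have := main l List.suffix_rfl
  rw [h1] at this
  simpa using (congrArg Subtype.val this).symm

lemma ncard_preimage_perm {A : Type*} (π : Perm A) (S : Set A) : {a | π a ∈ S}.ncard = S.ncard :=
  Set.ncard_preimage_of_injective_subset_range π.injective (by simp)

lemma rect {G : Type*} [Group G] (h : IsSofic G) (F : Finset G) (ε : ℝ) (hε : 0 < ε) :
    ∃ (A : Type) (_ : Finite A) (_ : Nonempty A) (ψ : G → Perm A),
      (∀ e ∈ F, ∀ f ∈ F, len ((ψ (e * f))⁻¹ * (ψ e * ψ f)) ≤ ε) ∧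
      ∀ e ∈ F, e ≠ 1 → 1 - ε ≤ len (ψ e) := by
  classical
  let F1 : Finset G := F ∪ F.biUnion (fun e => F.image (fun f => e * f))
  let F2 : Finset G := F1 ∪ F1.image (·⁻¹)
  have hF1 : ∀ e ∈ F1, e ∈ F2 ∧ e⁻¹ ∈ F2 := by
    intro e he
    exact ⟨Finset.mem_union_left _ he, Finset.mem_union_right _ (Finset.mem_image_of_mem _ he)⟩
  have hF : ∀ e ∈ F, e ∈ F1 := fun e he => Finset.mem_union_left _ he
  have hFF : ∀ e ∈ F, ∀ f ∈ F, e * f ∈ F1 := fun e he f hf =>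
    Finset.mem_union_right _ (Finset.mem_biUnion.2 ⟨e, he, Finset.mem_image_of_mem _ hf⟩)
  obtain ⟨δ, hδ0, hδ1, hδε⟩ : ∃ δ : ℝ, 0 < δ ∧ δ < 1 ∧ 7 * δ ≤ ε := by
    refine ⟨min (ε / 7) (1/2), by positivity, ?_, ?_⟩
    · exact lt_of_le_of_lt (min_le_right _ _) (by norm_num)
    · linarith [min_le_left (ε / 7) (1/2)]
  obtain ⟨A, _, _, φ, hm, h1, hfree⟩ := h F2 δ hδ0 hδ1
  have hcard : (0 : ℝ) < Nat.card A := by exact_mod_cast Nat.card_pos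
  have sim : ∀ (η : ℝ) (e f : A → A), EpsSimilar η e f ↔
      ({a | e a ≠ f a}.ncard : ℝ) ≤ η * Nat.card A := by
    intro η e f
    unfold EpsSimilar
    rw [Nat.card_eq_fintype_card (α := A), ← Nat.card_coe_set_eq]
    rfl
  simp only [sim] at hm h1 hfree
  have key : ∀ g : G, ∃ π : Perm A, ∀ a, φ g⁻¹ (φ g a) = a → π a = φ g a := by
    intro g
    exact exists_perm_extend (φ g) {a | φ g⁻¹ (φ g a) = a} (by
      intro a ha b hb hab
      simp only [Set.mem_ofPred_eq] at ha hb
      rw [← ha, ← hb, hab])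
  choose π hπ using key
  have bad : ∀ g, g ∈ F2 → g⁻¹ ∈ F2 → ({a | π g a ≠ φ g a}.ncard : ℝ) ≤ 2 * δ * Nat.card A := by
    intro g hg hg'
    have h2 := hm g hg _ hg'
    rw [mul_inv_cancel] at h2
    have : {a | π g a ≠ φ g a} ⊆ {a | φ 1 a ≠ φ g⁻¹ (φ g a)} ∪ {a | φ 1 a ≠ id a} := by
      intro a ha
      by_contra hc
      simp only [Set.mem_union, Set.mem_ofPred_eq, not_or, not_not, id] at hc
      exact ha (hπ g a (by rw [← hc.1, hc.2]))
    have h3 := (Set.ncard_le_ncard this).trans (Set.ncard_union_le _ _)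
    have h4 : ({a | π g a ≠ φ g a}.ncard : ℝ) ≤
      ({a | φ 1 a ≠ φ g⁻¹ (φ g a)}.ncard : ℝ) + ({a | φ 1 a ≠ id a}.ncard : ℝ) := by
      exact_mod_cast h3
    linarith
  refine ⟨A, inferInstance, inferInstance, fun g => π g⁻¹, ?_, ?_⟩
  · intro e he f hf
    have be := bad e⁻¹ (hF1 e (hF e he)).2 (by simpa using (hF1 e (hF e he)).1)
    have bf := bad f⁻¹ (hF1 f (hF f hf)).2 (by simpa using (hF1 f (hF f hf)).1)
    have bef := bad (e * f)⁻¹ (hF1 _ (hFF e he f hf)).2 (by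
      simpa only [inv_inv] using (hF1 _ (hFF e he f hf)).1)
    have hd := hm f⁻¹ (hF1 f (hF f hf)).2 e⁻¹ (hF1 e (hF e he)).2
    rw [← ncard_preimage_perm (π f⁻¹)] at be
    have hsub : {a | ((π (e * f)⁻¹)⁻¹ * (π e⁻¹ * π f⁻¹)) a ≠ a} ⊆
        (({a | π f⁻¹ a ∈ {a | π e⁻¹ a ≠ φ e⁻¹ a}} ∪ {a | π f⁻¹ a ≠ φ f⁻¹ a}) ∪
        {a | π (e * f)⁻¹ a ≠ φ (e * f)⁻¹ a}) ∪
        {a | φ (f⁻¹ * e⁻¹) a ≠ φ e⁻¹ (φ f⁻¹ a)} := by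
      intro a ha
      by_contra hc
      simp only [Set.mem_union, Set.mem_ofPred_eq, not_or, not_not] at hc
      obtain ⟨⟨⟨h1, h2⟩, h3⟩, h4⟩ := hc
      apply ha
      rw [Perm.mul_apply, Perm.inv_eq_iff_eq, Perm.mul_apply, h1, h2, h3, mul_inv_rev, h4]
    have h3 := Set.ncard_le_ncard hsub
    have h4 := h3.trans (Set.ncard_union_le _ _)
    have h5 := h4.trans (Nat.add_le_add_right (Set.ncard_union_le _ _) _)
    have h6 := h5.trans (Nat.add_le_add_right (Nat.add_le_add_right (Set.ncard_union_le _ _) _) _)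
    have h7 : (_ : ℝ) ≤ _ := Nat.cast_le.2 h6
    push_cast at h7
    unfold len
    rw [div_le_iff₀ hcard]
    refine h7.trans ?_
    nlinarith
  · intro e he hne
    have be := bad e⁻¹ (hF1 e (hF e he)).2 (by simpa using (hF1 e (hF e he)).1)
    have hf := hfree e⁻¹ (hF1 e (hF e he)).2 (by simpa using hne)
    have hsub : {a | φ e⁻¹ a ≠ id a} ⊆ {a | π e⁻¹ a ≠ a} ∪ {a | π e⁻¹ a ≠ φ e⁻¹ a} := by
      intro a ha
      by_contra hc
      simp only [Set.mem_union, Set.mem_ofPred_eq, not_or, not_not] at hc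
      exact ha (by rw [← hc.2, hc.1]; rfl)
    have h3 := (Set.ncard_le_ncard hsub).trans (Set.ncard_union_le _ _)
    have h7 : (_ : ℝ) ≤ _ := Nat.cast_le.2 h3
    push_cast at h7
    unfold len
    rw [le_div_iff₀ hcard]
    push Not at hf
    nlinarith

lemma common {I : Type*} (G : I → Type*) [∀ i, Group (G i)] (h : ∀ i, IsSofic (G i))
    (F : ∀ i, Finset (G i)) (ε : ℝ) (hε : 0 < ε) (s : Finset I) :
    ∃ (A : Type) (_ : Finite A) (_ : Nonempty A) (ψ : ∀ i, G i → Perm A), ∀ i ∈ s,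
      (∀ e ∈ F i, ∀ f ∈ F i, len ((ψ i (e * f))⁻¹ * (ψ i e * ψ i f)) ≤ ε) ∧
      ∀ e ∈ F i, e ≠ 1 → 1 - ε ≤ len (ψ i e) := by
  classical
  induction s using Finset.induction_on with
  | empty => exact ⟨Unit, inferInstance, inferInstance, fun _ _ => 1, by simp⟩
  | insert j s hj ih =>
    obtain ⟨A, _, _, ψ, hψ⟩ := ih
    obtain ⟨B, _, _, χ, hχ1, hχ2⟩ := rect (h j) (F j) ε hε
    refine ⟨A × B, inferInstance, inferInstance,
      Function.update (fun i g => prodL A B (ψ i g)) j (fun g => prodR A B (χ g)), ?_⟩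
    intro i hi
    by_cases hij : i = j
    · subst hij
      simp only [Function.update_self, ← map_mul, ← map_inv, len_prodR]
      exact ⟨hχ1, hχ2⟩
    · simp only [Function.update_of_ne hij, ← map_mul, ← map_inv, len_prodL]
      exact hψ i (Finset.mem_of_mem_insert_of_ne hi hij)

section Twist

variable {I : Type*} {G : I → Type*} {A : Type*} (ψ : ∀ i, G i → Perm A)

/-- Product of the permutations attached to the letters of a word. -/
def wprod (l : List (Σ i, G i)) : Perm A := (l.map fun p => ψ p.1 p.2).prod

lemma wprod_cons (p : Σ i, G i) (l : List (Σ i, G i)) :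
    wprod ψ (p :: l) = ψ p.1 p.2 * wprod ψ l := by simp [wprod]

/-- The free group word recorded along the path of `a` under the word `l`. -/
def cword : List (Σ i, G i) → A → List ((I × A) × Bool)
  | [], _ => []
  | p :: l, a => ((p.1, ψ p.1 p.2 (wprod ψ l a)), false) :: ((p.1, wprod ψ l a), true) :: cword l a

/-- Every step of the path of `a` under the word `l` moves the point. -/
def Good : List (Σ i, G i) → A → Prop
  | [], _ => True
  | p :: l, a => Good l a ∧ ψ p.1 p.2 (wprod ψ l a) ≠ wprod ψ l a

lemma cword_reduced (l : List (Σ i, G i)) (hl : l.IsChain (fun p q => p.1 ≠ q.1)) (a : A)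
    (ha : Good ψ l a) : FreeGroup.IsReduced (cword ψ l a) := by
  induction l with
  | nil => exact FreeGroup.IsReduced.nil
  | cons p l ih =>
    have ih := ih hl.tail ha.1
    have h2 := ha.2
    rw [cword, FreeGroup.isReduced_cons_cons]
    refine ⟨fun h => absurd (Prod.ext_iff.1 h).2 h2, ?_⟩
    cases l with
    | nil => exact FreeGroup.IsReduced.singleton
    | cons q l =>
      rw [cword] at ih ⊢
      rw [FreeGroup.isReduced_cons_cons]
      refine ⟨fun h => absurd (Prod.ext_iff.1 h).1 ?_, ih⟩
      exact (List.isChain_cons_cons.1 hl).1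

lemma cword_ne_one (l : List (Σ i, G i)) (hl : l.IsChain (fun p q => p.1 ≠ q.1)) (hne : l ≠ [])
    (a : A) (ha : Good ψ l a) : FreeGroup.mk (cword ψ l a) ≠ 1 := by
  classical
  intro h
  have h1 := (cword_reduced ψ l hl a ha).reduce_eq
  rw [← FreeGroup.toWord_mk, h, FreeGroup.toWord_one] at h1
  cases l with
  | nil => exact hne rfl
  | cons p l => simp [cword] at h1

lemma ncard_not_good [Finite A] [Nonempty A] (ε : ℝ) (l : List (Σ i, G i))
    (hl : ∀ p ∈ l, 1 - ε ≤ len (ψ p.1 p.2)) :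
    ({a | ¬ Good ψ l a}.ncard : ℝ) ≤ l.length * ε * Nat.card A := by
  have hcard : (0 : ℝ) < Nat.card A := by exact_mod_cast Nat.card_pos
  induction l with
  | nil => simp [Good]
  | cons p l ih =>
    have ih := ih (fun q hq => hl q (List.mem_cons_of_mem _ hq))
    have h1 := hl p List.mem_cons_self
    have hsub : {a | ¬ Good ψ (p :: l) a} ⊆ {a | ¬ Good ψ l a} ∪
        {a | wprod ψ l a ∈ {b | ψ p.1 p.2 b ≠ b}ᶜ} := by
      intro a ha
      by_contra hc
      simp only [Set.mem_union, Set.mem_ofPred_eq, not_or, not_not, Set.mem_compl_iff] at hc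
      exact ha hc
    have h3 := (Set.ncard_le_ncard hsub).trans (Set.ncard_union_le _ _)
    rw [ncard_preimage_perm] at h3
    have h7 : (_ : ℝ) ≤ _ := Nat.cast_le.2 h3
    have h8 : ((_ : ℕ) : ℝ) = _ := congrArg Nat.cast (Set.ncard_add_ncard_compl {b | ψ p.1 p.2 b ≠ b})
    push_cast at h7 h8
    unfold len at h1
    rw [le_div_iff₀ hcard] at h1
    simp only [List.length_cons]
    push_cast
    linarith

variable {Q : Type*} [Group Q] (f : FreeGroup (I × A) →* Q)

/-- The twisting permutation. -/
def shear (i : I) : Perm (A × Q) where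
  toFun p := (p.1, f (FreeGroup.of (i, p.1)) * p.2)
  invFun p := (p.1, (f (FreeGroup.of (i, p.1)))⁻¹ * p.2)
  left_inv p := by simp
  right_inv p := by simp

/-- The twisted quasi-actions. -/
def tw (i : I) (g : G i) : Perm (A × Q) := (shear f i)⁻¹ * prodL A Q (ψ i g) * shear f i

lemma tw_apply (i : I) (g : G i) (a : A) (q : Q) : tw ψ f i g (a, q) =
    (ψ i g a, (f (FreeGroup.of (i, ψ i g a)))⁻¹ * (f (FreeGroup.of (i, a)) * q)) := rfl

lemma wprod_tw (l : List (Σ i, G i)) (a : A) (q : Q) :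
    wprod (tw ψ f) l (a, q) = (wprod ψ l a, f (FreeGroup.mk (cword ψ l a)) * q) := by
  induction l with
  | nil => simp [wprod, cword, ← FreeGroup.one_eq_mk]
  | cons p l ih =>
    have : FreeGroup.mk (cword ψ (p :: l) a) =
        (FreeGroup.of (p.1, ψ p.1 p.2 (wprod ψ l a)))⁻¹ *
        (FreeGroup.of (p.1, wprod ψ l a) * FreeGroup.mk (cword ψ l a)) := by
      simp [cword, FreeGroup.of, FreeGroup.invRev]
    rw [wprod_cons, Perm.mul_apply, ih, tw_apply, this, wprod_cons]
    simp [mul_assoc]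

end Twist

lemma stage.{u, v} {I : Type u} (G : I → Type v) [∀ i, Group (G i)] (h : ∀ i, IsSofic (G i))
    (T : Finset (Σ i, G i)) (L : Finset (List (Σ i, G i))) (ε : ℝ) (hε : 0 < ε) :
    ∃ (A : Type u) (_ : Finite A) (_ : Nonempty A) (θ : ∀ i, G i → Perm A),
      (∀ i, ∀ g k : G i, ⟨i, g⟩ ∈ T → ⟨i, k⟩ ∈ T →
        len ((θ i (g * k))⁻¹ * (θ i g * θ i k)) ≤ ε) ∧
      ∀ l ∈ L, l ≠ [] → l.IsChain (fun p q => p.1 ≠ q.1) → (∀ p ∈ l, p ∈ T ∧ p.2 ≠ 1) →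
        1 - l.length * ε ≤ len (wprod θ l) := by
  classical
  obtain ⟨A, _, _, ψ, hψ⟩ := common G h
    (fun i => T.preimage (Sigma.mk i) sigma_mk_injective.injOn) ε hε (T.image Sigma.fst)
  have := Fintype.ofFinite A
  obtain ⟨B, _, f, hf⟩ := free_sep
    ((L ×ˢ (Finset.univ : Finset A)).image (fun x => cword ψ x.1 x.2))
  have hi : ∀ i (g : G i), ⟨i, g⟩ ∈ T → i ∈ T.image Sigma.fst := fun i g hg =>
    Finset.mem_image.2 ⟨_, hg, rfl⟩
  refine ⟨A × Perm B, inferInstance, inferInstance, tw ψ f, ?_, ?_⟩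
  · intro i g k hg hk
    have := (hψ i (hi i g hg)).1 g (by simpa using hg) k (by simpa using hk)
    have e : (tw ψ f i (g * k))⁻¹ * (tw ψ f i g * tw ψ f i k) =
        (shear f i)⁻¹ * prodL A (Perm B) ((ψ i (g * k))⁻¹ * (ψ i g * ψ i k)) * shear f i := by
      simp only [tw, map_mul, map_inv]
      group
    rw [e, len_conj, len_prodL]
    exact this
  · intro l hl hne hch hT
    have hng := ncard_not_good ψ ε l (by
      rintro ⟨i, g⟩ hp
      obtain ⟨h1, h2⟩ := hT _ hp
      exact (hψ i (hi i g h1)).2 g (by simpa using h1) h2)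
    have hcA : (0 : ℝ) < Nat.card A := by exact_mod_cast Nat.card_pos
    have hcB : (0 : ℝ) < Nat.card (Perm B) := by exact_mod_cast Nat.card_pos
    have hsub : {a | Good ψ l a} ×ˢ (Set.univ : Set (Perm B)) ⊆
        {x | wprod (tw ψ f) l x ≠ x} := by
      rintro ⟨a, q⟩ ⟨ha, -⟩ hx
      rw [wprod_tw, Prod.ext_iff] at hx
      refine hf _ (Finset.mem_image.2 ⟨(l, a), by simp [hl], rfl⟩)
        (cword_ne_one ψ l hch hne a ha) ?_
      simpa using hx.2
    have h3 := Set.ncard_le_ncard hsub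
    rw [Set.ncard_prod, Set.ncard_univ] at h3
    have h7 : (_ : ℝ) ≤ _ := Nat.cast_le.2 h3
    have h8 : ((_ : ℕ) : ℝ) = _ := congrArg Nat.cast (Set.ncard_add_ncard_compl {a | Good ψ l a})
    have h9 : {a | Good ψ l a}ᶜ = {a | ¬ Good ψ l a} := rfl
    rw [h9] at h8
    push_cast at h7 h8
    unfold len
    rw [Nat.card_prod, le_div_iff₀ (by push_cast; positivity)]
    refine le_trans ?_ h7
    push_cast
    rw [← mul_assoc]
    gcongr
    linarith

/-- Sequences of permutations with length tending to zero. -/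
def nullSub {K : Type*} (F : Filter K) (A : K → Type*) [∀ k, Finite (A k)] :
    Subgroup (∀ k, Perm (A k)) where
  carrier := {σ | Tendsto (fun k => len (σ k)) F (nhds 0)}
  one_mem' := by simpa [len_one] using tendsto_const_nhds
  mul_mem' {σ τ} hσ hτ := by
    refine squeeze_zero (fun k => len_nonneg _) (fun k => len_mul_le _ _) ?_
    simpa using Tendsto.add hσ hτ
  inv_mem' {σ} hσ := by simpa [len_inv] using hσ

instance {K : Type*} (F : Filter K) (A : K → Type*) [∀ k, Finite (A k)] :
    (nullSub F A).Normal where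
  conj_mem σ hσ τ := by
    have : ∀ k, len ((τ * σ * τ⁻¹) k) = len (σ k) := fun k => by
      simpa using len_conj (σ k) (τ k)⁻¹
    change Tendsto _ _ _
    simp only [this]
    exact hσ

lemma mem_nullSub {K : Type*} (F : Filter K) (A : K → Type*) [∀ k, Finite (A k)]
    (σ : ∀ k, Perm (A k)) : σ ∈ nullSub F A ↔ Tendsto (fun k => len (σ k)) F (nhds 0) := Iff.rfl

lemma isSofic_of_perm {G : Type*} [Group G]
    (h : ∀ (F : Finset G) (ε : ℝ), 0 < ε → ∃ (A : Type*) (_ : Finite A) (_ : Nonempty A)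
      (Φ : G → Perm A), (∀ e ∈ F, ∀ f ∈ F, len ((Φ (e * f))⁻¹ * (Φ e * Φ f)) ≤ ε) ∧
        len (Φ 1) ≤ ε ∧ ∀ e ∈ F, e ≠ 1 → 1 - ε < len (Φ e)) : IsSofic G := by
  intro F ε hε _
  classical
  obtain ⟨A, _, _, Φ, h1, h2, h3⟩ := h (F ∪ F.image (·⁻¹)) ε hε
  have hF : ∀ e ∈ F, e⁻¹ ∈ F ∪ F.image (·⁻¹) := fun e he =>
    Finset.mem_union_right _ (Finset.mem_image_of_mem _ he)
  have e : A ≃ Fin (Nat.card A) := Finite.equivFin A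
  have hn : Nonempty (Fin (Nat.card A)) := e.nonempty_congr.1 inferInstance
  have hcard : (0 : ℝ) < Nat.card A := by exact_mod_cast Nat.card_pos
  have sim : ∀ (η : ℝ) (σ τ : Perm A),
      EpsSimilar η (fun x => e (σ (e.symm x))) (fun x => e (τ (e.symm x))) ↔
      len (σ⁻¹ * τ) ≤ η := by
    intro η σ τ
    unfold EpsSimilar len
    rw [div_le_iff₀ hcard, Fintype.card_fin]
    have : Nat.card {x // e (σ (e.symm x)) ≠ e (τ (e.symm x))} =
        {a | (σ⁻¹ * τ) a ≠ a}.ncard := by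
      rw [← Nat.card_coe_set_eq]
      refine Nat.card_congr (Equiv.subtypeEquiv e.symm fun x => ?_)
      simp only [ne_eq, EmbeddingLike.apply_eq_iff_eq, Set.mem_ofPred_eq, Perm.mul_apply,
        Perm.inv_eq_iff_eq]
      exact not_congr eq_comm
    rw [this]
  have hid : (id : Fin (Nat.card A) → _) = fun x => e ((1 : Perm A) (e.symm x)) := by
    ext x; simp
  refine ⟨Fin (Nat.card A), inferInstance, hn, fun g x => e (Φ g⁻¹ (e.symm x)), ?_, ?_, ?_⟩
  · intro a ha b hb
    have := (sim ε (Φ (a * b)⁻¹) (Φ b⁻¹ * Φ a⁻¹)).2 (by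
      rw [mul_inv_rev]; exact h1 _ (hF b hb) _ (hF a ha))
    simpa using this
  · rw [hid, sim, mul_one, len_inv, inv_one]
    exact h2
  · intro a ha hne
    rw [hid, sim, mul_one, len_inv, not_le]
    exact h3 _ (hF a ha) (by simpa using hne)

end SoficAux

open SoficAux Filter in
/-- The free product (coproduct in the category of groups) of an arbitrary family of sofic
groups is sofic. -/
theorem isSofic_coprodI {I : Type*} (G : I → Type*) [∀ i, Group (G i)]
    (h : ∀ i, IsSofic (G i)) : IsSofic (Monoid.CoprodI G) := by
  classical
  let K := Finset (Σ i, G i) × Finset (List (Σ i, G i)) × ℕ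
  have hst := fun k : K => stage G h k.1 k.2.1 (1 / ((k.2.2 : ℝ) + 1)) (by positivity)
  choose A hA hA' θ hθ1 hθ2 using hst
  let N := nullSub (atTop : Filter K) A
  have hlim : Tendsto (fun k : K => 1 / ((k.2.2 : ℝ) + 1)) atTop (nhds 0) := by
    refine (tendsto_one_div_add_atTop_nhds_zero_nat (𝕜 := ℝ)).comp ?_
    refine tendsto_atTop.2 fun n => ?_
    filter_upwards [eventually_ge_atTop ((∅, ∅, n) : K)] with k hk
    exact hk.2.2
  let fi : ∀ i, G i →* (∀ k, Equiv.Perm (A k)) ⧸ N := fun i =>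
    MonoidHom.mk' (fun g => QuotientGroup.mk (fun k => θ k i g)) (by
      intro g g'
      rw [← QuotientGroup.mk_mul, QuotientGroup.eq, mem_nullSub]
      refine squeeze_zero' (Eventually.of_forall fun k => len_nonneg _) ?_ hlim
      filter_upwards [eventually_ge_atTop (({⟨i, g⟩, ⟨i, g'⟩}, ∅, 0) : K)] with k hk
      exact hθ1 k i g g' (hk.1 (by simp)) (hk.1 (by simp)))
  let ρ := Monoid.CoprodI.lift fi
  let Φ : Monoid.CoprodI G → ∀ k, Equiv.Perm (A k) := fun w => Quotient.out (ρ w)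
  have hΦ : ∀ w, (QuotientGroup.mk (Φ w) : (∀ k, Equiv.Perm (A k)) ⧸ N) = ρ w :=
    fun w => Quotient.out_eq' _
  have hmul : ∀ e f, Tendsto (fun k => len ((Φ (e * f) k)⁻¹ * (Φ e k * Φ f k))) atTop (nhds 0) := by
    intro e f
    have : (Φ (e * f))⁻¹ * (Φ e * Φ f) ∈ N := by
      rw [← QuotientGroup.eq, QuotientGroup.mk_mul, hΦ, hΦ, hΦ, map_mul]
    exact this
  have hone : Tendsto (fun k => len (Φ 1 k)) atTop (nhds 0) := by
    have : Φ 1 ∈ N := by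
      rw [← QuotientGroup.eq_one_iff, hΦ, map_one]
    exact this
  have hword : ∀ l : List (Σ i, G i),
      (QuotientGroup.mk (fun k => wprod (θ k) l) : (∀ k, Equiv.Perm (A k)) ⧸ N) =
      ρ (l.map fun p => Monoid.CoprodI.of p.2).prod := by
    intro l
    induction l with
    | nil => simp only [List.map_nil, List.prod_nil, map_one]; rfl
    | cons p l ih =>
      rw [List.map_cons, List.prod_cons, map_mul, ← ih, Monoid.CoprodI.lift_of]
      simp only [wprod_cons]
      rfl
  have hfree : ∀ e, e ≠ 1 → ∀ ε : ℝ, 0 < ε → ∀ᶠ k in atTop, 1 - ε < len (Φ e k) := by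
    intro e he ε hε
    let w := Monoid.CoprodI.Word.equiv e
    have hw : (w.toList.map fun p => Monoid.CoprodI.of p.2).prod = e :=
      Monoid.CoprodI.Word.equiv.symm_apply_apply e
    have hne : w.toList ≠ [] := by
      intro h0
      rw [h0] at hw
      exact he (by simpa using hw.symm)
    have hN : Tendsto (fun k => len ((Φ e k)⁻¹ * wprod (θ k) w.toList)) atTop (nhds 0) := by
      have : (Φ e)⁻¹ * (fun k => wprod (θ k) w.toList) ∈ N := by
        rw [← QuotientGroup.eq, hΦ, hword, hw]
      exact this
    have hlim2 : Tendsto (fun k : K => (w.toList.length : ℝ) * (1 / ((k.2.2 : ℝ) + 1)))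
        atTop (nhds 0) := by
      simpa using hlim.const_mul (w.toList.length : ℝ)
    filter_upwards [eventually_ge_atTop ((w.toList.toFinset, {w.toList}, 0) : K),
      hN.eventually_lt_const (half_pos hε), hlim2.eventually_lt_const (half_pos hε)]
      with k hk h1 h2
    have h3 := hθ2 k w.toList (hk.2.1 (by simp)) hne w.chain_ne (fun p hp =>
      ⟨hk.1 (by simpa using hp), w.ne_one p hp⟩)
    have h4 := len_mul_le (Φ e k) ((Φ e k)⁻¹ * wprod (θ k) w.toList)
    rw [mul_inv_cancel_left] at h4
    linarith
  apply isSofic_of_perm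
  intro F ε hε
  have e1 : ∀ᶠ k in atTop, ∀ e ∈ F, ∀ f ∈ F, len ((Φ (e * f) k)⁻¹ * (Φ e k * Φ f k)) < ε := by
    simp only [Filter.eventually_all_finset]
    exact fun e _ f _ => (hmul e f).eventually_lt_const hε
  have e2 : ∀ᶠ k in atTop, ∀ e ∈ F, e ≠ 1 → 1 - ε < len (Φ e k) := by
    simp only [Filter.eventually_all_finset]
    intro e _
    by_cases he : e = 1
    · exact Eventually.of_forall fun k h => absurd he h
    · filter_upwards [hfree e he ε hε] with k hk _ using hk
  obtain ⟨k, h1, h2, h3⟩ := (e1.and (e2.and (hone.eventually_lt_const hε))).exists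
  exact ⟨A k, hA k, hA' k, fun g => Φ g k, fun e he f hf => (h1 e he f hf).le, h3.le, h2⟩
end

section
/- Let G be a group and N ◁ G a normal subgroup such that N is sofic and the quotient group G/N satisfies the Følner condition. Then G is sofic. -/
/-- A group `M` satisfies the Følner condition (is amenable as a discrete group) if for every
finite `F ⊆ M` and every `ε > 0` there is a nonempty finite `A ⊆ M` with
`|A·g \ A| ≤ ε·|A|` for all `g ∈ F`. -/
def FolnerCondition (M : Type*) [Group M] : Prop :=
  ∀ (F : Finset M) (ε : ℝ), 0 < ε →
    ∃ A : Finset M, A.Nonempty ∧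
      ∀ g ∈ F, ((((fun a => a * g) '' (A : Set M)) \ (A : Set M)).ncard : ℝ) ≤ ε * A.card

open Classical in
theorem epsSimilar_iff {A : Type*} [Fintype A] (ε : ℝ) (e f : A → A) :
    EpsSimilar ε e f ↔
      ((Finset.univ.filter (fun a => e a ≠ f a)).card : ℝ) ≤ ε * Fintype.card A := by
  unfold EpsSimilar
  rw [Nat.card_eq_fintype_card, Fintype.card_subtype]

open Classical in
theorem not_epsSimilar_iff {A : Type*} [Fintype A] (ε : ℝ) (e f : A → A) :
    ¬ EpsSimilar (1 - ε) e f ↔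
      ((Finset.univ.filter (fun a => e a = f a)).card : ℝ) < ε * Fintype.card A := by
  rw [epsSimilar_iff, not_le]
  have h := Finset.card_filter_add_card_filter_not (s := (Finset.univ : Finset A))
    (fun a => e a = f a)
  have h' : ((Finset.univ.filter (fun a => e a = f a)).card : ℝ) +
      ((Finset.univ.filter (fun a => e a ≠ f a)).card : ℝ) = Fintype.card A := by
    rw [← Finset.card_univ]
    exact_mod_cast h
  constructor <;> intro h <;> linarith

open Classical in
theorem fibre_count {B A : Type*} [Fintype B] [Fintype A] (P : B × A → Prop)
    (S : Finset A) (s d : ℝ) (hd : 0 ≤ d) (hS : (S.card : ℝ) ≤ s * Fintype.card A)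
    (h : ∀ q, q ∉ S →
      ((Finset.univ.filter (fun b => P (b, q))).card : ℝ) ≤ d * Fintype.card B) :
    ((Finset.univ.filter P).card : ℝ) ≤ (s + d) * Fintype.card (B × A) := by
  have h1 : ((Finset.univ.filter P).card : ℝ) =
      ∑ q : A, ((Finset.univ.filter (fun b => P (b, q))).card : ℝ) := by
    simp only [Finset.card_filter]
    push_cast
    rw [Fintype.sum_prod_type_right]
  have hB : (0 : ℝ) ≤ Fintype.card B := by positivity
  have h2 : ∀ q : A, ((Finset.univ.filter (fun b => P (b, q))).card : ℝ) ≤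
      (if q ∈ S then (Fintype.card B : ℝ) else 0) + d * Fintype.card B := by
    intro q
    split_ifs with hq
    · have : ((Finset.univ.filter (fun b => P (b, q))).card : ℝ) ≤ Fintype.card B := by
        exact_mod_cast Finset.card_le_univ _
      have := mul_nonneg hd hB
      linarith
    · have := h q hq
      linarith
  rw [h1]
  refine (Finset.sum_le_sum (fun q _ => h2 q)).trans ?_
  rw [Finset.sum_add_distrib, Finset.sum_ite_mem, Finset.univ_inter, Finset.sum_const,
    Finset.sum_const, Finset.card_univ, Fintype.card_prod]
  push_cast
  simp only [nsmul_eq_mul]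
  nlinarith [mul_le_mul_of_nonneg_right hS hB]

theorem not_epsSimilar_iff' {A : Type*} [Fintype A] (ε : ℝ) (e f : A → A) :
    ¬ EpsSimilar (1 - ε) e f ↔
      (Nat.card {a : A // e a = f a} : ℝ) < ε * Fintype.card A := by
  classical
  rw [not_epsSimilar_iff, Nat.card_eq_fintype_card, Fintype.card_subtype]

theorem fibre_count' {B A : Type*} [Fintype B] [Fintype A] (P : B × A → Prop)
    (S : Finset A) (s d : ℝ) (hd : 0 ≤ d) (hS : (S.card : ℝ) ≤ s * Fintype.card A)
    (h : ∀ q, q ∉ S → (Nat.card {b // P (b, q)} : ℝ) ≤ d * Fintype.card B) :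
    (Nat.card {x // P x} : ℝ) ≤ (s + d) * Fintype.card (B × A) := by
  classical
  rw [Nat.card_eq_fintype_card, Fintype.card_subtype]
  refine fibre_count P S s d hd hS fun q hq => ?_
  have := h q hq
  rwa [Nat.card_eq_fintype_card, Fintype.card_subtype] at this

theorem card_imp {B : Type*} [Fintype B] {P Q : B → Prop} (h : ∀ b, P b → Q b) :
    (Nat.card {b // P b} : ℝ) ≤ Nat.card {b // Q b} :=
  Nat.cast_le.2 (Nat.card_le_card_of_injective _ (Subtype.impEmbedding P Q h).injective)

theorem epsSimilar_conj {A A' : Type*} [Fintype A] [Fintype A'] (E : A ≃ A') (ε : ℝ)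
    (e f : A → A) :
    EpsSimilar ε (fun x => E (e (E.symm x))) (fun x => E (f (E.symm x))) ↔ EpsSimilar ε e f := by
  unfold EpsSimilar
  rw [Fintype.card_congr E]
  have : Nat.card {a : A' // E (e (E.symm a)) ≠ E (f (E.symm a))} =
      Nat.card {a : A // e a ≠ f a} := by
    refine Nat.card_congr (E.symm.subtypeEquiv ?_)
    intro a
    simp
  rw [this]

theorem IsQuasiAction.transport {G : Type*} [Group G] {F : Finset G} {ε : ℝ}
    {A A' : Type*} [Fintype A] [Fintype A'] (E : A ≃ A') {φ : G → A → A}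
    (h : IsQuasiAction F ε φ) :
    IsQuasiAction F ε (fun g x => E (φ g (E.symm x))) := by
  obtain ⟨h1, h2, h3⟩ := h
  have hid : (id : A' → A') = fun x => E (id (E.symm x)) := by
    funext x; simp
  refine ⟨fun e he f hf => ?_, ?_, fun e he hne => ?_⟩
  · have := (epsSimilar_conj E _ _ _).2 (h1 e he f hf)
    simpa using this
  · rw [hid, epsSimilar_conj]; exact h2
  · rw [hid, epsSimilar_conj]; exact h3 e he hne

/-- The cocycle `G/N × G → N` of the chosen section of `G → G/N`. -/
noncomputable def secCocycle {G : Type*} [Group G] (N : Subgroup G) [N.Normal]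
    (q : G ⧸ N) (g : G) : N :=
  ⟨q.out * g * ((q * (g : G ⧸ N)).out)⁻¹, by
    rw [← QuotientGroup.eq_one_iff]
    simp⟩

theorem secCocycle_mul {G : Type*} [Group G] (N : Subgroup G) [N.Normal]
    (q : G ⧸ N) (g h : G) :
    secCocycle N q (g * h) = secCocycle N q g * secCocycle N (q * (g : G ⧸ N)) h := by
  apply Subtype.ext
  simp [secCocycle, mul_assoc]

theorem secCocycle_one {G : Type*} [Group G] (N : Subgroup G) [N.Normal]
    (q : G ⧸ N) : secCocycle N q 1 = 1 := by
  apply Subtype.ext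
  simp [secCocycle]

theorem secCocycle_ne {G : Type*} [Group G] (N : Subgroup G) [N.Normal]
    (q : G ⧸ N) (g : G) (hg : (g : G ⧸ N) = 1) (hne : g ≠ 1) : secCocycle N q g ≠ 1 := by
  intro h
  have := congrArg Subtype.val h
  simp [secCocycle, hg] at this
  exact hne this

open Classical in
theorem folner_bad {M : Type*} [Group M] (A : Finset M) (g : M) (s : ℝ)
    (h : ((((fun a => a * g) '' (A : Set M)) \ (A : Set M)).ncard : ℝ) ≤ s * A.card) :
    ((Finset.univ.filter (fun q : A => (q : M) * g ∉ A)).card : ℝ) ≤ s * Fintype.card A := by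
  rw [Fintype.card_coe]
  refine le_trans ?_ h
  have e : ((Finset.univ.filter (fun q : A => (q : M) * g ∉ A)).image
      (fun q : A => (q : M) * g)).card =
      (Finset.univ.filter (fun q : A => (q : M) * g ∉ A)).card := by
    apply Finset.card_image_of_injective
    intro a b hab
    exact Subtype.ext (mul_right_cancel hab)
  rw [← e, ← Set.ncard_coe_finset]
  apply Nat.cast_le.2
  apply Set.ncard_le_ncard
  · intro x hx
    simp only [Finset.coe_image, Set.mem_image, Finset.mem_coe, Finset.mem_filter] at hx
    obtain ⟨q, ⟨_, hq⟩, rfl⟩ := hx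
    exact ⟨⟨q, q.2, rfl⟩, hq⟩
  · exact (A.finite_toSet.image _).sdiff

theorem folner_bad' {M : Type*} [Group M] (A : Finset M) (g : M) (s : ℝ)
    (h : ((((fun a => a * g) '' (A : Set M)) \ (A : Set M)).ncard : ℝ) ≤ s * A.card) :
    ∃ S : Finset A, (S.card : ℝ) ≤ s * Fintype.card A ∧ ∀ q, q ∉ S → (q : M) * g ∈ A := by
  classical
  exact ⟨_, folner_bad A g s h, fun q hq => by simpa using hq⟩

open Classical in
/-- The induced quasi-action on `B × A`. -/
noncomputable def inducedMap {G : Type*} [Group G] (N : Subgroup G) [N.Normal]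
    (A : Finset (G ⧸ N)) {B : Type*} (ψ : N → B → B) (g : G) (x : B × A) : B × A :=
  if h : (x.2 : G ⧸ N) * (g : G ⧸ N) ∈ A then
    (ψ (secCocycle N x.2 g) x.1, ⟨(x.2 : G ⧸ N) * (g : G ⧸ N), h⟩)
  else x

/-- If `N ◁ G` is a sofic normal subgroup and the quotient `G/N` satisfies the Følner
condition (is amenable), then `G` is sofic. -/
theorem isSofic_of_normal_folner_quotient {G : Type*} [Group G] (N : Subgroup G) [N.Normal]
    (hN : IsSofic N) (hQ : FolnerCondition (G ⧸ N)) : IsSofic G := by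
  classical
  intro F ε hε hε1
  obtain ⟨A, hAne, hA⟩ := hQ ((F ∪ (F ×ˢ F).image (fun p => p.1 * p.2)).image
    (fun g : G => (g : G ⧸ N))) (ε / 4) (by linarith)
  obtain ⟨B, _, _, ψ, hψ1, hψ2, hψ3⟩ := hN ((A ×ˢ F).image (fun p => secCocycle N p.1 p.2))
    (ε / 4) (by linarith) (by linarith)
  have hFN : ∀ q ∈ A, ∀ g ∈ F,
      secCocycle N q g ∈ (A ×ˢ F).image (fun p => secCocycle N p.1 p.2) := by
    intro q hq g hg
    exact Finset.mem_image.2 ⟨(q, g), Finset.mem_product.2 ⟨hq, hg⟩, rfl⟩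
  have hA1 : ∀ g ∈ F, ∃ S : Finset A, (S.card : ℝ) ≤ ε / 4 * Fintype.card A ∧
      ∀ q, q ∉ S → (q : G ⧸ N) * (g : G ⧸ N) ∈ A := by
    intro g hg
    apply folner_bad' A (g : G ⧸ N) (ε / 4)
    apply hA
    apply Finset.mem_image.2
    exact ⟨g, Finset.mem_union_left _ hg, rfl⟩
  have hA2 : ∀ g ∈ F, ∀ h ∈ F, ∃ S : Finset A, (S.card : ℝ) ≤ ε / 4 * Fintype.card A ∧
      ∀ q, q ∉ S → (q : G ⧸ N) * ((g * h : G) : G ⧸ N) ∈ A := by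
    intro g hg h hh
    apply folner_bad' A ((g * h : G) : G ⧸ N) (ε / 4)
    apply hA
    apply Finset.mem_image.2
    refine ⟨g * h, Finset.mem_union_right _ ?_, rfl⟩
    exact Finset.mem_image.2 ⟨(g, h), Finset.mem_product.2 ⟨hg, hh⟩, rfl⟩
  have : Nonempty A := hAne.to_subtype
  have hpos : (0 : ℝ) < Fintype.card (B × A) := by exact_mod_cast Fintype.card_pos
  have key : IsQuasiAction F ε (inducedMap N A ψ) := by
    refine ⟨fun g hg h hh => ?_, ?_, fun g hg hne => ?_⟩
    · obtain ⟨S1, hS1, hS1'⟩ := hA1 g hg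
      obtain ⟨S2, hS2, hS2'⟩ := hA2 g hg h hh
      refine (fibre_count' _ (S1 ∪ S2) (ε / 4 + ε / 4) (ε / 4) (by linarith) ?_ ?_).trans ?_
      · refine le_trans (Nat.cast_le.2 (Finset.card_union_le _ _)) ?_
        push_cast
        linarith
      · intro q hq
        rw [Finset.mem_union, not_or] at hq
        have hq1 := hS1' q hq.1
        have hq2 := hS2' q hq.2
        refine le_trans (card_imp ?_) (hψ1 _ (hFN q q.2 g hg) _ (hFN _ hq1 h hh))
        intro b hb hb'
        apply hb
        have hq3 : (q : G ⧸ N) * (g : G ⧸ N) * (h : G ⧸ N) ∈ A := by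
          simpa [mul_assoc] using hq2
        have e1 : inducedMap N A ψ g (b, q) =
          (ψ (secCocycle N q g) b, ⟨(q : G ⧸ N) * (g : G ⧸ N), hq1⟩) := dif_pos hq1
        beta_reduce
        rw [e1]
        unfold inducedMap
        rw [dif_pos hq2, dif_pos hq3]
        simp only
        rw [secCocycle_mul, hb']
        simp [mul_assoc]
      · nlinarith
    · refine (fibre_count' _ ∅ 0 (ε / 4) (by linarith) (by simp) ?_).trans ?_
      · intro q _
        refine le_trans (card_imp ?_) hψ2
        intro b hb hb'
        apply hb
        have hq : (q : G ⧸ N) * ((1 : G) : G ⧸ N) ∈ A := by simp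
        unfold inducedMap
        rw [dif_pos hq]
        simp only
        rw [secCocycle_one, hb']
        simp
      · nlinarith
    · rw [not_epsSimilar_iff']
      obtain ⟨S1, hS1, hS1'⟩ := hA1 g hg
      refine (fibre_count' _ S1 (ε / 4) (ε / 4) (by linarith) hS1 ?_).trans_lt ?_
      · intro q hq'
        have hq := hS1' q hq'
        have e1 : ∀ b, inducedMap N A ψ g (b, q) =
          (ψ (secCocycle N q g) b, ⟨(q : G ⧸ N) * (g : G ⧸ N), hq⟩) := fun b => dif_pos hq
        by_cases hg1 : (g : G ⧸ N) = 1
        · have := (not_epsSimilar_iff' _ _ _).1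
            (hψ3 _ (hFN q q.2 g hg) (secCocycle_ne N q g hg1 hne))
          refine le_trans (card_imp ?_) this.le
          intro b hb
          rw [e1] at hb
          exact congrArg Prod.fst hb
        · have : IsEmpty {b // inducedMap N A ψ g (b, q) = id (b, q)} := by
            refine ⟨fun ⟨b, hb⟩ => ?_⟩
            rw [e1] at hb
            have := congrArg (fun x : B × A => (x.2 : G ⧸ N)) hb
            exact hg1 (by simpa using this)
          rw [Nat.card_of_isEmpty]
          simp only [Nat.cast_zero]
          positivity
      · nlinarith
  exact ⟨Fin (Fintype.card (B × A)), inferInstance,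
    ⟨Fintype.equivFin (B × A) (Classical.arbitrary _)⟩, _,
    key.transport (Fintype.equivFin (B × A))⟩
end

section
/- Every group satisfying the Følner condition is sofic. That is, if G is a group such that for every finite subset F ⊆ G and every real ε > 0 there exists a nonempty finite subset A ⊆ G with |A·g \ A| ≤ ε·|A| for all g ∈ F, then G is sofic. -/
/-- Every group satisfying the Følner condition (i.e., every amenable group) is sofic. -/
theorem isSofic_of_folner {G : Type*} [Group G] (h : FolnerCondition G) : IsSofic G := by
  classical
  intro F ε hε hε1
  obtain ⟨A, hA, hF⟩ := h (F ∪ Finset.image₂ (fun a b => a * b) F F) (ε / 4) (by positivity)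
  have hpos : 0 < A.card := hA.card_pos
  have hposR : (0 : ℝ) < A.card := by exact_mod_cast hpos
  let t : Fin A.card ≃ A := A.equivFin.symm
  let φ : G → Fin A.card → Fin A.card := fun g i =>
    if hg : (t i : G) * g ∈ A then t.symm ⟨(t i : G) * g, hg⟩ else i
  have hφ : ∀ g i, (t i : G) * g ∈ A → (t (φ g i) : G) = t i * g := by
    intro g i hg
    simp [φ, hg]
  let B : G → Finset (Fin A.card) := fun g => Finset.univ.filter (fun i => (t i : G) * g ∉ A)
  have hB : ∀ g ∈ F ∪ Finset.image₂ (fun a b => a * b) F F,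
      ((B g).card : ℝ) ≤ ε / 4 * A.card := by
    intro g hg
    refine le_trans ?_ (hF g hg)
    have h1 : (B g).card = ((fun i => (t i : G) * g) '' (B g : Set (Fin A.card))).ncard := by
      rw [Set.ncard_image_of_injective, Set.ncard_coe_finset]
      intro i j hij
      exact t.injective (Subtype.ext (mul_right_cancel hij))
    rw [h1]
    have hfin : (((fun a => a * g) '' (A : Set G)) \ (A : Set G)).Finite :=
      (A.finite_toSet.image _).subset Set.sdiff_subset
    refine Nat.cast_le.mpr (Set.ncard_le_ncard (by
      rintro _ ⟨i, hi, rfl⟩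
      have hi' : (t i : G) * g ∉ A := by simpa [B] using hi
      exact ⟨⟨t i, (t i).2, rfl⟩, hi'⟩) hfin)
  refine ⟨Fin A.card, inferInstance, ⟨⟨0, hpos⟩⟩, φ, ?_, ?_, ?_⟩
  · intro e he f hf
    unfold EpsSimilar
    rw [Nat.card_eq_fintype_card, Fintype.card_subtype, Fintype.card_fin]
    have hsub : (Finset.univ.filter (fun i => φ (e * f) i ≠ φ f (φ e i))) ⊆ B e ∪ B (e * f) := by
      intro i hi
      by_contra hn
      simp only [B, Finset.mem_union, Finset.mem_filter, Finset.mem_univ, true_and, not_or,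
        not_not] at hn hi
      apply hi
      apply t.injective
      apply Subtype.ext
      have h1 := hφ e i hn.1
      rw [hφ _ _ hn.2, hφ f (φ e i) (by rw [h1, mul_assoc]; exact hn.2), h1, mul_assoc]
    have h1 := (Finset.card_le_card hsub).trans (Finset.card_union_le _ _)
    have h1' : ((Finset.univ.filter (fun i => φ (e * f) i ≠ φ f (φ e i))).card : ℝ)
        ≤ (B e).card + (B (e * f)).card := by exact_mod_cast h1
    have h2 := hB e (Finset.mem_union_left _ he)
    have h3 := hB (e * f) (Finset.mem_union_right _ (Finset.mem_image₂_of_mem he hf))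
    nlinarith [mul_pos hε hposR]
  · unfold EpsSimilar
    have : ∀ i, φ 1 i = i := by
      intro i
      simp [φ]
    simp only [this, id, ne_eq, not_true_eq_false]
    simp
    positivity
  · intro e he hne hs
    unfold EpsSimilar at hs
    rw [Nat.card_eq_fintype_card, Fintype.card_subtype, Fintype.card_fin] at hs
    have hsub : Finset.univ ⊆ B e ∪ (Finset.univ.filter (fun i => φ e i ≠ id i)) := by
      intro i _
      by_cases hi : (t i : G) * e ∈ A
      · apply Finset.mem_union_right
        simp only [Finset.mem_filter, Finset.mem_univ, true_and, id]
        intro heq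
        have h1 := hφ e i hi
        rw [heq] at h1
        exact hne (left_eq_mul.mp h1)
      · apply Finset.mem_union_left
        simpa [B] using hi
    have h1 := (Finset.card_le_card hsub).trans (Finset.card_union_le _ _)
    rw [Finset.card_univ, Fintype.card_fin] at h1
    have h1' : (A.card : ℝ)
        ≤ (B e).card + (Finset.univ.filter (fun i => φ e i ≠ id i)).card := by exact_mod_cast h1
    have h2 := hB e (Finset.mem_union_left _ he)
    nlinarith [mul_pos hε hposR]
end

section
/- Every residually finite group is sofic. That is, if G is a group such that for every g ∈ G with g ≠ 1 there exists a finite group H and a group homomorphism φ : G → H with φ(g) ≠ 1, then G is sofic. -/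
/-- Every residually finite group is sofic. -/
theorem isSofic_of_residuallyFinite {G : Type*} [Group G]
    (h : ∀ g : G, g ≠ 1 → ∃ (H : Type) (_ : Group H) (_ : Finite H) (φ : G →* H), φ g ≠ 1) :
    IsSofic G := by
  classical
  intro F ε h0 h1
  have h' : ∀ g : G, ∃ (H : Type) (_ : Group H) (_ : Finite H) (φ : G →* H),
      g ≠ 1 → φ g ≠ 1 := by
    intro g
    by_cases hg : g = 1
    · exact ⟨Unit, inferInstance, inferInstance, 1, fun hn => (hn hg).elim⟩
    · obtain ⟨H, i1, i2, φ, hφ⟩ := h g hg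
      exact ⟨H, i1, i2, φ, fun _ => hφ⟩
  choose H i1 i2 φ hφ using h'
  let B : Type := (i : Fin F.card) → H (F.equivFin.symm i : G)
  let ψ : G →* B := Pi.monoidHom fun i => φ (F.equivFin.symm i : G)
  have hψ : ∀ e ∈ F, e ≠ 1 → ψ e ≠ 1 := by
    intro e he hne hc
    have h2 := congrFun hc (F.equivFin ⟨e, he⟩)
    have h3 : ∀ x : F, x = ⟨e, he⟩ → φ (x : G) e = 1 → False := by
      rintro x rfl h4
      exact hφ e hne h4
    exact h3 (F.equivFin.symm (F.equivFin ⟨e, he⟩)) (by simp) h2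
  have hfin : Finite B := Pi.finite
  let inst : Fintype B := Fintype.ofFinite B
  have hsim : ∀ f g : B → B, (∀ a, f a = g a) → EpsSimilar ε f g := by
    intro f g hfg
    have : IsEmpty {a : B // f a ≠ g a} := ⟨fun x => x.2 (hfg x.1)⟩
    unfold EpsSimilar
    rw [Nat.card_of_isEmpty]
    push_cast
    positivity
  refine ⟨B, inst, ⟨1⟩, fun g a => a * ψ g, ?_, ?_, ?_⟩
  · intro e _ f _
    exact hsim _ _ fun a => by simp only [map_mul, mul_assoc]
  · exact hsim _ _ fun a => by simp
  · intro e he hne hs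
    unfold EpsSimilar at hs
    have hall : ∀ a : B, a * ψ e ≠ id a := by
      intro a hc
      exact hψ e he hne (mul_eq_left.mp hc)
    have hcard : Nat.card {a : B // a * ψ e ≠ id a} = Fintype.card B := by
      rw [Nat.card_congr (Equiv.subtypeUnivEquiv hall), Nat.card_eq_fintype_card]
    rw [hcard] at hs
    have hpos : (0 : ℝ) < Fintype.card B := by
      have : Nonempty B := ⟨1⟩
      exact_mod_cast Fintype.card_pos
    nlinarith
end

section
/- Every residually amenable group is sofic. That is, if G is a group such that for every g ∈ G with g ≠ 1 there exists a group M satisfying the Følner condition and a group homomorphism φ : G → M with φ(g) ≠ 1, then G is sofic. -/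
/-- A group is residually amenable if every nontrivial element survives in a homomorphism
to some group satisfying the Følner condition. -/
def ResiduallyAmenable (G : Type*) [Group G] : Prop :=
  ∀ g : G, g ≠ 1 → ∃ (M : Type) (_ : Group M), FolnerCondition M ∧ ∃ φ : G →* M, φ g ≠ 1

theorem folner_ncard {M : Type*} [Group M] (A : Finset M) (g : M)
    [DecidablePred (fun a => a * g ∉ A)] :
    (((fun a => a * g) '' (A : Set M)) \ (A : Set M)).ncard
      = (A.filter (fun a => a * g ∉ A)).card := by
  have : (((fun a => a * g) '' (A : Set M)) \ (A : Set M))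
      = (fun a => a * g) '' ((A.filter (fun a => a * g ∉ A) : Finset M) : Set M) := by
    ext x
    simp only [Set.mem_sdiff, Set.mem_image, Finset.coe_filter, Set.mem_ofPred_eq, Finset.mem_coe]
    constructor
    · rintro ⟨⟨a, ha, rfl⟩, h⟩
      exact ⟨a, ⟨ha, h⟩, rfl⟩
    · rintro ⟨a, ⟨ha, h⟩, rfl⟩
      exact ⟨⟨a, ha, rfl⟩, h⟩
  rw [this, Set.ncard_image_of_injective _ (mul_left_injective g), Set.ncard_coe_finset]

theorem folner_unit : FolnerCondition PUnit.{1} := by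
  intro F ε hε
  refine ⟨{1}, by simp, fun g _ => ?_⟩
  classical
  rw [folner_ncard]
  have : (({1} : Finset PUnit.{1}).filter (fun a => a * g ∉ ({1} : Finset PUnit.{1}))) = ∅ := by
    ext x; simp
  rw [this]
  simp [hε.le]

theorem folner_prod {M N : Type} [Group M] [Group N] (hM : FolnerCondition M)
    (hN : FolnerCondition N) : FolnerCondition (M × N) := by
  classical
  intro F ε hε
  obtain ⟨A, hA, hA'⟩ := hM (F.image Prod.fst) (ε / 2) (by positivity)
  obtain ⟨B, hB, hB'⟩ := hN (F.image Prod.snd) (ε / 2) (by positivity)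
  refine ⟨A ×ˢ B, hA.product hB, fun g hg => ?_⟩
  have h1 := hA' g.1 (Finset.mem_image_of_mem _ hg)
  have h2 := hB' g.2 (Finset.mem_image_of_mem _ hg)
  rw [folner_ncard] at h1 h2 ⊢
  have hsub : ((A ×ˢ B).filter (fun a => a * g ∉ A ×ˢ B)) ⊆
      (A.filter (fun a => a * g.1 ∉ A)) ×ˢ B ∪ A ×ˢ (B.filter (fun a => a * g.2 ∉ B)) := by
    intro x hx
    simp only [Finset.mem_filter, Finset.mem_product, Finset.mem_union, Prod.fst_mul,
      Prod.snd_mul] at hx ⊢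
    tauto
  have hc := (Finset.card_le_card hsub).trans (Finset.card_union_le _ _)
  rw [Finset.card_product, Finset.card_product] at hc
  have hc' : (((A ×ˢ B).filter (fun a => a * g ∉ A ×ˢ B)).card : ℝ) ≤
      ((A.filter (fun a => a * g.1 ∉ A)).card : ℝ) * B.card +
      A.card * ((B.filter (fun a => a * g.2 ∉ B)).card : ℝ) := by exact_mod_cast hc
  refine hc'.trans ?_
  rw [Finset.card_product]
  push_cast
  have hb : (0 : ℝ) ≤ B.card := by positivity
  have ha : (0 : ℝ) ≤ A.card := by positivity
  nlinarith [mul_le_mul_of_nonneg_right h1 hb, mul_le_mul_of_nonneg_left h2 ha]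

theorem exists_folner_separating {G : Type*} [Group G] (h : ResiduallyAmenable G)
    (F : Finset G) : ∃ (M : Type) (_ : Group M), FolnerCondition M ∧
      ∃ φ : G →* M, ∀ g ∈ F, g ≠ 1 → φ g ≠ 1 := by
  classical
  induction F using Finset.induction_on with
  | empty => exact ⟨PUnit, inferInstance, folner_unit, 1, by simp⟩
  | insert a s _ ih =>
    obtain ⟨M, _, hM, φ, hφ⟩ := ih
    by_cases ha : a = 1
    · refine ⟨M, _, hM, φ, fun g hg hg1 => ?_⟩
      rcases Finset.mem_insert.1 hg with rfl | hg
      · exact absurd ha hg1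
      · exact hφ g hg hg1
    · obtain ⟨N, _, hN, ψ, hψ⟩ := h a ha
      refine ⟨M × N, inferInstance, folner_prod hM hN, φ.prod ψ, fun g hg hg1 he => ?_⟩
      rw [MonoidHom.prod_apply, Prod.mk_eq_one] at he
      rcases Finset.mem_insert.1 hg with rfl | hg
      · exact hψ he.2
      · exact hφ g hg hg1 he.1

/-- Every residually amenable group is sofic. -/
theorem isSofic_of_residuallyAmenable {G : Type*} [Group G]
    (h : ResiduallyAmenable G) : IsSofic G := by
  classical
  intro F ε hε hε1
  obtain ⟨M, _, hM, Φ, hΦ⟩ := exists_folner_separating h F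
  obtain ⟨A, hA, hA'⟩ := hM ((F ∪ F.biUnion (fun e => F.image (fun f => e * f))).image Φ)
    (ε / 2) (by positivity)
  let bad : G → Finset {x // x ∈ A} := fun g => Finset.univ.filter (fun a => (a : M) * Φ g ∉ A)
  have hbad : ∀ g ∈ F ∪ F.biUnion (fun e => F.image (fun f => e * f)),
      ((bad g).card : ℝ) ≤ ε / 2 * A.card := by
    intro g hg
    have h1 := hA' (Φ g) (Finset.mem_image_of_mem _ hg)
    rw [folner_ncard] at h1
    refine le_trans ?_ h1
    rw [← Finset.card_map (Function.Embedding.subtype _)]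
    refine Nat.cast_le.2 (Finset.card_le_card ?_)
    intro x hx
    obtain ⟨y, hy, rfl⟩ := Finset.mem_map.1 hx
    exact Finset.mem_filter.2 ⟨y.2, (Finset.mem_filter.1 hy).2⟩
  have hApos : (0 : ℝ) < A.card := by exact_mod_cast hA.card_pos
  let ψ : G → {x // x ∈ A} → {x // x ∈ A} := fun g a =>
    if hg : (a : M) * Φ g ∈ A then ⟨(a : M) * Φ g, hg⟩ else a
  refine ⟨{x // x ∈ A}, inferInstance, hA.to_subtype, ψ, ?_, ?_, ?_⟩
  · intro e he f hf
    have h1 := hbad e (Finset.mem_union_left _ he)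
    have h2 := hbad (e * f) (Finset.mem_union_right _ (Finset.mem_biUnion.2
      ⟨e, he, Finset.mem_image_of_mem _ hf⟩))
    unfold EpsSimilar
    rw [Nat.card_eq_fintype_card, Fintype.card_subtype, Fintype.card_coe]
    have hsub : (Finset.univ.filter (fun a => ψ (e * f) a ≠ ψ f (ψ e a))) ⊆
        bad e ∪ bad (e * f) := by
      intro a ha
      by_contra hn
      simp only [bad, Finset.mem_union, Finset.mem_filter, Finset.mem_univ, true_and, not_or,
        not_not] at hn
      refine (Finset.mem_filter.1 ha).2 ?_
      have h3 : (a : M) * Φ e * Φ f ∈ A := by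
        have := hn.2
        rwa [map_mul, ← mul_assoc] at this
      simp only [ψ, dif_pos hn.1, dif_pos hn.2, dif_pos h3]
      simp [mul_assoc]
    have hc : ((Finset.univ.filter (fun a => ψ (e * f) a ≠ ψ f (ψ e a))).card : ℝ) ≤
        (bad e).card + (bad (e * f)).card := by
      exact_mod_cast (Finset.card_le_card hsub).trans (Finset.card_union_le _ _)
    linarith
  · unfold EpsSimilar
    have : ψ 1 = id := by
      funext a
      simp [ψ]
    rw [this]
    simp only [ne_eq, not_true_eq_false, Nat.card_of_isEmpty, Nat.cast_zero]
    positivity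
  · intro e he he1 hs
    have h1 := hbad e (Finset.mem_union_left _ he)
    unfold EpsSimilar at hs
    rw [Nat.card_eq_fintype_card, Fintype.card_subtype, Fintype.card_coe] at hs
    have hsub : (Finset.univ : Finset {x // x ∈ A}) ⊆
        (Finset.univ.filter (fun a => ψ e a ≠ id a)) ∪ bad e := by
      intro a _
      by_cases hb : (a : M) * Φ e ∈ A
      · refine Finset.mem_union_left _ (Finset.mem_filter.2 ⟨Finset.mem_univ _, ?_⟩)
        intro heq
        simp only [ψ, dif_pos hb, id] at heq
        have := congrArg Subtype.val heq
        exact hΦ e he he1 (by simpa using this)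
      · exact Finset.mem_union_right _ (Finset.mem_filter.2 ⟨Finset.mem_univ _, hb⟩)
    have hc := (Finset.card_le_card hsub).trans (Finset.card_union_le _ _)
    rw [Finset.card_univ, Fintype.card_coe] at hc
    have hc' : (A.card : ℝ) ≤
        ((Finset.univ.filter (fun a => ψ e a ≠ id a)).card : ℝ) + (bad e).card := by
      exact_mod_cast hc
    nlinarith
end

section
/- The free product of two locally residually amenable groups is sofic. That is, if G and H are groups such that every finitely generated subgroup of G and every finitely generated subgroup of H is residually amenable, then the free product G ∗ H is sofic. -/
open Equiv in
/-- Soficity via permutations with an exceptional set. -/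
def PermSofic (G : Type*) [Group G] : Prop :=
  ∀ (E : Finset G) (ε : ℝ), 0 < ε →
    ∃ (A : Type) (_ : Fintype A) (_ : Nonempty A) (α : G → Perm A) (S : Set A),
      (S.ncard : ℝ) ≤ ε * Fintype.card A ∧
      ∀ a, a ∉ S → (∀ e ∈ E, ∀ f ∈ E, α (e * f) a = α e (α f a)) ∧
        (∀ e ∈ E, e ≠ 1 → α e a ≠ a)

theorem folner_perm {M : Type} [Group M] (hM : FolnerCondition M) (E : Finset M) (ε : ℝ)
    (hε : 0 < ε) :
    ∃ (A : Type) (_ : Fintype A) (_ : Nonempty A) (α : M → Equiv.Perm A) (S : Set A),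
      (S.ncard : ℝ) ≤ ε * Fintype.card A ∧
      ∀ a, a ∉ S → (∀ e ∈ E, ∀ f ∈ E, α (e * f) a = α e (α f a)) ∧
        (∀ e ∈ E, e ≠ 1 → α e a ≠ a) := by
  classical
  let F : Finset M := E.image (fun e => e⁻¹) ∪ (E ×ˢ E).image (fun p => (p.1 * p.2)⁻¹)
  obtain ⟨A, hA, hF⟩ := hM F (ε / (F.card + 1)) (by positivity)
  have hex : ∀ g : M, ∃ σ : Equiv.Perm A, ∀ a : A, ∀ h : (a : M) * g⁻¹ ∈ A,
      σ a = ⟨(a : M) * g⁻¹, h⟩ := by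
    intro g
    obtain ⟨σ, hσ⟩ := Equiv.Perm.exists_extending_pair
      (fun x : {a : A // (a : M) * g⁻¹ ∈ A} => x.1)
      (fun x : {a : A // (a : M) * g⁻¹ ∈ A} => (⟨(x.1 : M) * g⁻¹, x.2⟩ : A))
      Subtype.val_injective
      (by
        intro x y hxy
        have := congrArg Subtype.val hxy
        simp only [mul_left_inj] at this
        exact Subtype.ext (Subtype.ext this))
    exact ⟨σ, fun a h => hσ ⟨a, h⟩⟩
  choose α hα using hex
  refine ⟨A, inferInstance, hA.to_subtype, α, ⋃ g ∈ F, {a : A | (a : M) * g ∉ A}, ?_, ?_⟩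
  · have hc : ∀ g ∈ F, (({a : A | (a : M) * g ∉ A}).ncard : ℝ) ≤ ε / (F.card + 1) * A.card := by
      intro g hg
      refine le_trans ?_ (hF g hg)
      refine Nat.cast_le.2 ?_
      refine Set.ncard_le_ncard_of_injOn (fun a : A => (a : M) * g) ?_ ?_ ?_
      · intro a ha
        exact ⟨⟨a, a.2, rfl⟩, by simpa using ha⟩
      · intro a _ b _ hab
        simp only [mul_left_inj] at hab
        exact Subtype.ext hab
      · exact ((A.finite_toSet.image _).subset Set.sdiff_subset)
    calc ((⋃ g ∈ F, {a : A | (a : M) * g ∉ A}).ncard : ℝ)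
        ≤ ∑ g ∈ F, (({a : A | (a : M) * g ∉ A}).ncard : ℝ) := by
          exact_mod_cast Finset.set_ncard_biUnion_le F _
      _ ≤ ∑ g ∈ F, ε / (F.card + 1) * A.card := Finset.sum_le_sum hc
      _ = (F.card / (F.card + 1)) * (ε * A.card) := by
          rw [Finset.sum_const, nsmul_eq_mul]; ring
      _ ≤ 1 * (ε * A.card) := by
          gcongr
          rw [div_le_one (by positivity)]; linarith
      _ = ε * Fintype.card A := by simp
  · intro a ha
    simp only [Set.mem_iUnion, Set.mem_ofPred_eq, not_exists, not_not] at ha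
    have h1 : ∀ e ∈ E, (a : M) * e⁻¹ ∈ A := fun e he => ha _ (by
      simp only [F, Finset.mem_union, Finset.mem_image]; exact Or.inl ⟨e, he, rfl⟩)
    have h2 : ∀ e ∈ E, ∀ f ∈ E, (a : M) * (e * f)⁻¹ ∈ A := fun e he f hf => ha _ (by
      simp only [F, Finset.mem_union, Finset.mem_image]
      exact Or.inr ⟨(e, f), by simp [he, hf], rfl⟩)
    constructor
    · intro e he f hf
      rw [hα _ a (h2 e he f hf), hα f a (h1 f hf), hα e]
      · simp [mul_assoc]
      · simpa [mul_assoc] using h2 e he f hf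
    · intro e he hne h
      rw [hα e a (h1 e he)] at h
      have := congrArg Subtype.val h
      simp at this
      exact hne this

theorem permSofic_of_locally {G : Type*} [Group G]
    (hG : ∀ K : Subgroup G, K.FG → ResiduallyAmenable K) : PermSofic G := by
  classical
  intro E
  have key : ∀ E' : Finset G, E' ⊆ E → ∀ ε : ℝ, 0 < ε →
      ∃ (A : Type) (_ : Fintype A) (_ : Nonempty A) (α : G → Equiv.Perm A) (S : Set A),
      (S.ncard : ℝ) ≤ ε * Fintype.card A ∧
      ∀ a, a ∉ S → (∀ e ∈ E, ∀ f ∈ E, α (e * f) a = α e (α f a)) ∧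
        (∀ e ∈ E', e ≠ 1 → α e a ≠ a) := by
    intro E'
    induction E' using Finset.induction_on with
    | empty =>
      intro _ ε hε
      exact ⟨Unit, inferInstance, inferInstance, fun _ => 1, ∅, by simpa using hε.le, by simp⟩
    | insert x E' hx ih =>
      intro hsub ε hε
      have hxE : x ∈ E := hsub (Finset.mem_insert_self _ _)
      obtain ⟨A, _, _, α, S, hS, hα⟩ := ih ((Finset.subset_insert _ _).trans hsub) (ε / 2)
        (by positivity)
      by_cases hx1 : x = 1
      · refine ⟨A, inferInstance, inferInstance, α, S, hS.trans (by gcongr; linarith), ?_⟩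
        intro a ha
        refine ⟨(hα a ha).1, ?_⟩
        intro e he hne
        rcases Finset.mem_insert.1 he with rfl | he
        · exact absurd hx1 hne
        · exact (hα a ha).2 e he hne
      let K := Subgroup.closure (E : Set G)
      have hEK : ∀ e ∈ E, e ∈ K := fun e he => Subgroup.subset_closure he
      obtain ⟨M, _, hM, φ, hφ⟩ := hG K ⟨E, rfl⟩ ⟨x, hEK x hxE⟩ (by
        intro h; exact hx1 (congrArg Subtype.val h))
      let ψ : G → M := fun g => if h : g ∈ K then φ ⟨g, h⟩ else 1
      have hψm : ∀ e ∈ E, ∀ f ∈ E, ψ (e * f) = ψ e * ψ f := by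
        intro e he f hf
        simp only [ψ, hEK e he, hEK f hf, mul_mem (hEK e he) (hEK f hf), dite_true]
        rw [← map_mul]; rfl
      have hψx : ψ x ≠ 1 := by simpa [ψ, hEK x hxE] using hφ
      obtain ⟨B, _, _, β, T, hT, hβ⟩ := folner_perm hM (E.image ψ) (ε / 2) (by positivity)
      refine ⟨A × B, inferInstance, inferInstance,
        fun g => Equiv.prodCongr (α g) (β (ψ g)), S ×ˢ Set.univ ∪ Set.univ ×ˢ T, ?_, ?_⟩
      · have h1 : ((S ×ˢ Set.univ ∪ Set.univ ×ˢ T : Set (A × B)).ncard : ℝ) ≤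
            S.ncard * Fintype.card B + Fintype.card A * T.ncard := by
          have := Set.ncard_union_le (S ×ˢ Set.univ : Set (A × B)) (Set.univ ×ˢ T)
          rw [Set.ncard_prod, Set.ncard_prod, Set.ncard_univ, Set.ncard_univ,
            Nat.card_eq_fintype_card, Nat.card_eq_fintype_card] at this
          exact_mod_cast this
        rw [Fintype.card_prod]; push_cast
        have hA : (0 : ℝ) ≤ Fintype.card A := by positivity
        have hB : (0 : ℝ) ≤ Fintype.card B := by positivity
        nlinarith [mul_le_mul_of_nonneg_right hS hB, mul_le_mul_of_nonneg_left hT hA]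
      · rintro ⟨a, b⟩ hab
        simp only [Set.mem_union, Set.mem_prod, Set.mem_univ, and_true, true_and, not_or] at hab
        obtain ⟨ha, hb⟩ := hab
        constructor
        · intro e he f hf
          simp only [Equiv.prodCongr_apply, Prod.map_apply, Prod.mk.injEq]
          refine ⟨(hα a ha).1 e he f hf, ?_⟩
          rw [hψm e he f hf]
          exact (hβ b hb).1 _ (Finset.mem_image_of_mem _ he) _ (Finset.mem_image_of_mem _ hf)
        · intro e he hne h
          simp only [Equiv.prodCongr_apply, Prod.map_apply, Prod.mk.injEq] at h
          rcases Finset.mem_insert.1 he with rfl | he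
          · exact (hβ b hb).2 _ (Finset.mem_image_of_mem _ hxE) hψx h.2
          · exact (hα a ha).2 e he hne h.1
  exact key E (Finset.Subset.refl _)

/-- Finite quotients of free groups of finite rank detecting short words. -/
theorem freeGroup_quotient (X : Type) [Finite X] (n : ℕ) :
    ∃ (V : Type) (_ : Group V) (_ : Fintype V) (θ : FreeGroup X →* V),
      ∀ L : List (X × Bool), FreeGroup.IsReduced L → L.length ≤ n → L ≠ [] →
        θ (FreeGroup.mk L) ≠ 1 := by
  classical
  let S : Set (FreeGroup X) := {w | FreeGroup.norm w ≤ n}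
  have hSf : S.Finite := by
    have : S = FreeGroup.toWord ⁻¹' {l : List (X × Bool) | l.length ≤ n} := rfl
    rw [this]
    exact (List.finite_length_le (X × Bool) n).preimage FreeGroup.toWord_injective.injOn
  have : Fintype S := hSf.fintype
  have hex : ∀ x : X, ∃ σ : Equiv.Perm S, ∀ s : S, ∀ h : FreeGroup.of x * (s : FreeGroup X) ∈ S,
      σ s = ⟨FreeGroup.of x * (s : FreeGroup X), h⟩ := by
    intro x
    obtain ⟨σ, hσ⟩ := Equiv.Perm.exists_extending_pair
      (fun y : {s : S // FreeGroup.of x * (s : FreeGroup X) ∈ S} => y.1)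
      (fun y : {s : S // FreeGroup.of x * (s : FreeGroup X) ∈ S} =>
        (⟨FreeGroup.of x * (y.1 : FreeGroup X), y.2⟩ : S))
      Subtype.val_injective
      (by
        intro a b hab
        have := congrArg Subtype.val hab
        simp only [mul_right_inj] at this
        exact Subtype.ext (Subtype.ext this))
    exact ⟨σ, fun a h => hσ ⟨a, h⟩⟩
  choose π hπ using hex
  have hmem : ∀ L : List (X × Bool), L.length ≤ n → FreeGroup.mk L ∈ S := fun L hL =>
    FreeGroup.norm_mk_le.trans hL
  have hact : ∀ (L : List (X × Bool)) (hL : L.length ≤ n),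
      FreeGroup.lift π (FreeGroup.mk L) ⟨1, hmem [] (Nat.zero_le _)⟩ =
        ⟨FreeGroup.mk L, hmem L hL⟩ := by
    intro L
    induction L with
    | nil => intro _; rfl
    | cons y L ih =>
      intro hL
      have hL' : L.length ≤ n := by simp at hL; omega
      obtain ⟨x, b⟩ := y
      have hsplit : FreeGroup.mk ((x, b) :: L) = FreeGroup.mk [(x, b)] * FreeGroup.mk L := by
        rw [FreeGroup.mul_mk]; rfl
      have hm := hmem _ hL
      cases b with
      | true =>
        have h1 : FreeGroup.mk ((x, true) :: L) = FreeGroup.of x * FreeGroup.mk L := hsplit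
        have h2 : FreeGroup.lift π (FreeGroup.mk ((x, true) :: L)) =
            π x * FreeGroup.lift π (FreeGroup.mk L) := by
          rw [h1, map_mul, FreeGroup.lift_apply_of]
        rw [h2, Equiv.Perm.mul_apply, ih hL', hπ x _ (by rw [h1] at hm; exact hm)]
        exact Subtype.ext h1.symm
      | false =>
        have h1 : FreeGroup.mk ((x, false) :: L) = (FreeGroup.of x)⁻¹ * FreeGroup.mk L := hsplit
        have h2 : FreeGroup.lift π (FreeGroup.mk ((x, false) :: L)) =
            (π x)⁻¹ * FreeGroup.lift π (FreeGroup.mk L) := by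
          rw [h1, map_mul, map_inv, FreeGroup.lift_apply_of]
        rw [h2, Equiv.Perm.mul_apply, ih hL', Equiv.Perm.inv_eq_iff_eq]
        have h3 : FreeGroup.of x * FreeGroup.mk ((x, false) :: L) = FreeGroup.mk L := by
          rw [h1, mul_inv_cancel_left]
        rw [hπ x _ (by simp only [h3]; exact hmem L hL')]
        exact Subtype.ext h3.symm
  refine ⟨Equiv.Perm S, inferInstance, inferInstance, FreeGroup.lift π, ?_⟩
  intro L hred hL hne h
  have h1 := hact L hL
  rw [h, Equiv.Perm.one_apply] at h1
  have h2 : (FreeGroup.mk L : FreeGroup X) = 1 := (congrArg Subtype.val h1).symm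
  have h3 := congrArg FreeGroup.toWord h2
  rw [FreeGroup.toWord_mk, hred.reduce_eq, FreeGroup.toWord_one] at h3
  exact hne h3

/-- Families of subsets of vanishing density. -/
def Negl {I : Type*} (l : Filter I) (X : I → Type) [∀ i, Fintype (X i)]
    (B : ∀ i, Set (X i)) : Prop :=
  ∀ ε : ℝ, 0 < ε → ∀ᶠ i in l, ((B i).ncard : ℝ) ≤ ε * Fintype.card (X i)

section negl
variable {I : Type*} {l : Filter I} {X : I → Type} [∀ i, Fintype (X i)]

theorem Negl.mono {B C : ∀ i, Set (X i)} (hC : Negl l X C) (h : ∀ i, B i ⊆ C i) :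
    Negl l X B := by
  intro ε hε
  filter_upwards [hC ε hε] with i hi
  refine le_trans ?_ hi
  exact_mod_cast Set.ncard_le_ncard (h i) (Set.toFinite _)

theorem Negl.union {B C : ∀ i, Set (X i)} (hB : Negl l X B) (hC : Negl l X C) :
    Negl l X (fun i => B i ∪ C i) := by
  intro ε hε
  filter_upwards [hB (ε / 2) (by positivity), hC (ε / 2) (by positivity)] with i h1 h2
  have : ((B i ∪ C i).ncard : ℝ) ≤ (B i).ncard + (C i).ncard := by
    exact_mod_cast Set.ncard_union_le _ _
  linarith

theorem Negl.empty : Negl l X (fun _ => ∅) := by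
  intro ε hε
  filter_upwards with i
  simp only [Set.ncard_empty, Nat.cast_zero]
  positivity

theorem Negl.preimage {B : ∀ i, Set (X i)} (hB : Negl l X B) (σ : ∀ i, Equiv.Perm (X i)) :
    Negl l X (fun i => σ i ⁻¹' B i) := by
  intro ε hε
  filter_upwards [hB ε hε] with i hi
  rwa [Set.ncard_preimage_of_injective_subset_range (σ i).injective (by simp)]

end negl

/-- Asymptotic equality of sequences of permutations. -/
def hammingCon {I : Type*} (l : Filter I) (X : I → Type) [∀ i, Fintype (X i)] :
    Con (∀ i, Equiv.Perm (X i)) where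
  r σ τ := Negl l X (fun i => {x | σ i x ≠ τ i x})
  iseqv :=
    { refl := fun σ => Negl.empty.mono (fun i x hx => hx rfl)
      symm := fun h => h.mono (fun i x hx => Ne.symm hx)
      trans := fun h1 h2 => (h1.union h2).mono (fun i x hx => by
        by_contra hc
        simp only [Set.mem_union, Set.mem_ofPred_eq, not_or, not_not] at hc
        exact hx (hc.1.trans hc.2)) }
  mul' := by
    intro w x y z h1 h2
    refine ((h1.preimage y).union h2).mono ?_
    intro i p hp
    by_contra hc
    simp only [Set.mem_union, Set.mem_preimage, Set.mem_ofPred_eq, not_or, not_not] at hc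
    apply hp
    simp only [Pi.mul_apply, Equiv.Perm.mul_apply]
    rw [hc.1, hc.2]

theorem hammingCon_iff {I : Type*} {l : Filter I} {X : I → Type} [∀ i, Fintype (X i)]
    {σ τ : ∀ i, Equiv.Perm (X i)} :
    ((σ : (hammingCon l X).Quotient) = τ) ↔ Negl l X (fun i => {x | σ i x ≠ τ i x}) :=
  Con.eq _

theorem isSofic_of_approx {Γ : Type*} [Group Γ] {I : Type*} (l : Filter I) [l.NeBot]
    (X : I → Type) [∀ i, Fintype (X i)] [∀ i, Nonempty (X i)]
    (Φ : Γ →* (hammingCon l X).Quotient)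
    (hfree : ∀ w : Γ, w ≠ 1 → ∃ σ : ∀ i, Equiv.Perm (X i),
      (σ : (hammingCon l X).Quotient) = Φ w ∧ Negl l X (fun i => {x | σ i x = x})) :
    IsSofic Γ := by
  intro F ε hε _
  have hs : ∀ w : Γ, ∃ σ : ∀ i, Equiv.Perm (X i), (σ : (hammingCon l X).Quotient) = Φ w :=
    fun w => by
      induction Φ w using Con.induction_on with
      | H σ => exact ⟨σ, rfl⟩
  choose s hs using hs
  have ha : ∀ e f : Γ, Negl l X
      (fun i => {x | s (e * f)⁻¹ i x ≠ s f⁻¹ i (s e⁻¹ i x)}) := by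
    intro e f
    have : ((s (e * f)⁻¹ : ∀ i, Equiv.Perm (X i)) : (hammingCon l X).Quotient) =
        ((s f⁻¹ * s e⁻¹ : ∀ i, Equiv.Perm (X i)) : (hammingCon l X).Quotient) := by
      rw [Con.coe_mul, hs, hs, hs, mul_inv_rev, map_mul]
    have h := (hammingCon_iff (σ := s (e * f)⁻¹) (τ := s f⁻¹ * s e⁻¹)).1 this
    exact h.mono (fun i x hx => hx)
  have hb : Negl l X (fun i => {x | s 1 i x ≠ x}) := by
    have : ((s 1 : ∀ i, Equiv.Perm (X i)) : (hammingCon l X).Quotient) =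
        ((1 : ∀ i, Equiv.Perm (X i)) : (hammingCon l X).Quotient) := by
      rw [hs, map_one, Con.coe_one]
    have h := (hammingCon_iff (σ := s 1) (τ := 1)).1 this
    exact h.mono (fun i x hx => hx)
  have hc : ∀ e : Γ, e ≠ 1 → Negl l X (fun i => {x | s e⁻¹ i x = x}) := by
    intro e he
    obtain ⟨σ, h1, h2⟩ := hfree e⁻¹ (inv_ne_one.2 he)
    have h3 := (hammingCon_iff (σ := σ) (τ := s e⁻¹)).1 (h1.trans (hs e⁻¹).symm)
    refine (h2.union h3).mono ?_
    intro i x hx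
    by_contra hc
    simp only [Set.mem_union, Set.mem_ofPred_eq, not_or, not_not] at hc hx
    exact hc.1 (hc.2.trans hx)
  have h1 : ∀ᶠ i in l, ∀ e ∈ F, ∀ f ∈ F,
      (({x | s (e * f)⁻¹ i x ≠ s f⁻¹ i (s e⁻¹ i x)} : Set (X i)).ncard : ℝ) ≤
        ε * Fintype.card (X i) := by
    rw [Filter.eventually_all_finset]
    intro e _
    rw [Filter.eventually_all_finset]
    intro f _
    exact ha e f ε hε
  have h2 : ∀ᶠ i in l, ∀ e ∈ F, e ≠ 1 →
      (({x | s e⁻¹ i x = x} : Set (X i)).ncard : ℝ) ≤ (ε / 2) * Fintype.card (X i) := by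
    rw [Filter.eventually_all_finset]
    intro e _
    by_cases he : e = 1
    · simp [he]
    · filter_upwards [hc e he (ε / 2) (by positivity)] with i hi _ using hi
  obtain ⟨i, h1, h2, h3⟩ := (h1.and (h2.and (hb ε hε))).exists
  refine ⟨X i, inferInstance, inferInstance, fun w => s w⁻¹ i, ?_, ?_, ?_⟩
  · exact h1
  · have : ((1 : Γ)⁻¹) = 1 := inv_one
    show EpsSimilar ε (s (1 : Γ)⁻¹ i) id
    rw [this]
    exact h3
  · intro e he hne hsim
    have h4 := h2 e he hne
    have h5 : (({x | s e⁻¹ i x ≠ x} : Set (X i)).ncard : ℝ) ≤ (1 - ε) * Fintype.card (X i) := hsim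
    have h6 := Set.ncard_add_ncard_compl ({x | s e⁻¹ i x = x} : Set (X i))
    have h7 : ({x | s e⁻¹ i x = x} : Set (X i))ᶜ = {x | s e⁻¹ i x ≠ x} := rfl
    rw [h7, Nat.card_eq_fintype_card] at h6
    have h8 : (0 : ℝ) < Fintype.card (X i) := by exact_mod_cast Fintype.card_pos
    have h9 : (({x | s e⁻¹ i x = x} : Set (X i)).ncard : ℝ) +
        ({x | s e⁻¹ i x ≠ x} : Set (X i)).ncard = Fintype.card (X i) := by exact_mod_cast h6
    nlinarith

/-- Alternating words with nontrivial letters. -/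
def AltWord {G H : Type*} [Group G] [Group H] (L : List (G ⊕ H)) : Prop :=
  L.IsChain (fun s s' => s.isLeft ≠ s'.isLeft) ∧
    ∀ s ∈ L, (∀ g, s = Sum.inl g → g ≠ 1) ∧ (∀ h, s = Sum.inr h → h ≠ 1)

theorem exists_altWord {G H : Type*} [Group G] [Group H] (w : Monoid.Coprod G H) :
    ∃ L : List (G ⊕ H), AltWord L ∧
      (L.map (Sum.elim (Monoid.Coprod.inl : G →* Monoid.Coprod G H)
        (Monoid.Coprod.inr : H →* Monoid.Coprod G H))).prod = w := by
  induction w using Monoid.Coprod.induction_on' with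
  | one => exact ⟨[], ⟨by simp, by simp⟩, rfl⟩
  | inl_mul g x ih =>
    obtain ⟨L, ⟨hL, hL'⟩, rfl⟩ := ih
    by_cases hg : g = 1
    · exact ⟨L, ⟨hL, hL'⟩, by simp [hg]⟩
    match L, hL, hL' with
    | [], _, _ => exact ⟨[Sum.inl g], ⟨by simp, by simpa using hg⟩, by simp⟩
    | Sum.inr h :: L, hL, hL' =>
      refine ⟨Sum.inl g :: Sum.inr h :: L, ⟨?_, ?_⟩, by simp⟩
      · rw [List.isChain_cons_cons]; exact ⟨by simp, hL⟩
      · intro s hs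
        rcases List.mem_cons.1 hs with rfl | hs
        · simpa using hg
        · exact hL' s hs
    | Sum.inl g' :: L, hL, hL' =>
      rw [List.isChain_cons] at hL
      by_cases hgg : g * g' = 1
      · refine ⟨L, ⟨hL.2, fun s hs => hL' s (List.mem_cons_of_mem _ hs)⟩, ?_⟩
        simp [← mul_assoc, ← map_mul, hgg]
      · refine ⟨Sum.inl (g * g') :: L, ⟨?_, ?_⟩, by simp [mul_assoc]⟩
        · rw [List.isChain_cons]; exact hL
        · intro s hs
          rcases List.mem_cons.1 hs with rfl | hs
          · simpa using hgg
          · exact hL' s (List.mem_cons_of_mem _ hs)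
  | inr_mul g x ih =>
    obtain ⟨L, ⟨hL, hL'⟩, rfl⟩ := ih
    by_cases hg : g = 1
    · exact ⟨L, ⟨hL, hL'⟩, by simp [hg]⟩
    match L, hL, hL' with
    | [], _, _ => exact ⟨[Sum.inr g], ⟨by simp, by simpa using hg⟩, by simp⟩
    | Sum.inl h :: L, hL, hL' =>
      refine ⟨Sum.inr g :: Sum.inl h :: L, ⟨?_, ?_⟩, by simp⟩
      · rw [List.isChain_cons_cons]; exact ⟨by simp, hL⟩
      · intro s hs
        rcases List.mem_cons.1 hs with rfl | hs
        · simpa using hg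
        · exact hL' s hs
    | Sum.inr g' :: L, hL, hL' =>
      rw [List.isChain_cons] at hL
      by_cases hgg : g * g' = 1
      · refine ⟨L, ⟨hL.2, fun s hs => hL' s (List.mem_cons_of_mem _ hs)⟩, ?_⟩
        simp [← mul_assoc, ← map_mul, hgg]
      · refine ⟨Sum.inr (g * g') :: L, ⟨?_, ?_⟩, by simp [mul_assoc]⟩
        · rw [List.isChain_cons]; exact hL
        · intro s hs
          rcases List.mem_cons.1 hs with rfl | hs
          · simpa using hgg
          · exact hL' s (List.mem_cons_of_mem _ hs)

section twisted
variable {G H A B V : Type*} [Group V]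

/-- First factor acting on `A × B × V`. -/
def actL (σ : Equiv.Perm A) : Equiv.Perm (A × B × V) := Equiv.prodCongr σ (Equiv.refl _)

/-- Second factor acting on `A × B × V`, twisted by the cocycle coming from `t`. -/
def actR (t : A × B → V) (τ : Equiv.Perm B) : Equiv.Perm (A × B × V) where
  toFun x := (x.1, τ x.2.1, t (x.1, τ x.2.1) * ((t (x.1, x.2.1))⁻¹ * x.2.2))
  invFun x := (x.1, τ.symm x.2.1, t (x.1, τ.symm x.2.1) * ((t (x.1, x.2.1))⁻¹ * x.2.2))
  left_inv x := by simp
  right_inv x := by simp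

/-- The permutation attached to a letter. -/
def letterPerm (t : A × B → V) (α : G → Equiv.Perm A) (β : H → Equiv.Perm B) :
    G ⊕ H → Equiv.Perm (A × B × V) :=
  Sum.elim (fun g => actL (α g)) (fun h => actR t (β h))

/-- A letter moves a point in its own coordinate. -/
def Moves (α : G → Equiv.Perm A) (β : H → Equiv.Perm B) (s : G ⊕ H) (x : A × B × V) : Prop :=
  Sum.elim (fun g => α g x.1 ≠ x.1) (fun h => β h x.2.1 ≠ x.2.1) s

/-- Every letter of the word moves the current point. -/
def GoodAt (t : A × B → V) (α : G → Equiv.Perm A) (β : H → Equiv.Perm B) :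
    List (G ⊕ H) → A × B × V → Prop
  | [], _ => True
  | s :: L, x => GoodAt t α β L x ∧ Moves α β s ((L.map (letterPerm t α β)).prod x)

theorem exists_path (θ : FreeGroup (A × B) →* V) (α : G → Equiv.Perm A) (β : H → Equiv.Perm B)
    (x : A × B × V) (L : List (G ⊕ H)) :
    L.IsChain (fun s s' => s.isLeft ≠ s'.isLeft) →
    GoodAt (fun y => θ (FreeGroup.of y)) α β L x →
    ∃ p : List ((A × B) × Bool), FreeGroup.IsReduced p ∧ p.length ≤ 2 * L.length ∧
      ((L.map (letterPerm (fun y => θ (FreeGroup.of y)) α β)).prod x).2.2 =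
        θ (FreeGroup.mk p) * x.2.2 ∧
      (∀ y ∈ p.head?, y.2 = true ∧
        y.1.2 = ((L.map (letterPerm (fun y => θ (FreeGroup.of y)) α β)).prod x).2.1 ∧
        ∀ s ∈ L.head?,
          (s.isLeft = true → y.1.1 ≠
            ((L.map (letterPerm (fun y => θ (FreeGroup.of y)) α β)).prod x).1) ∧
          (s.isLeft = false → y.1.1 =
            ((L.map (letterPerm (fun y => θ (FreeGroup.of y)) α β)).prod x).1)) ∧
      (L = [] → p = []) ∧ (p = [] → ∀ s ∈ L, s.isLeft = true) := by
  induction L with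
  | nil =>
    intro _ _
    refine ⟨[], FreeGroup.IsReduced.nil, by simp, ?_, by simp, by simp, by simp⟩
    simp [← FreeGroup.one_eq_mk]
  | cons s L ih =>
    intro hch hgood
    rw [List.isChain_cons] at hch
    obtain ⟨hg1, hmv⟩ := hgood
    obtain ⟨p, hred, hlen, hv, hhead, hnil, hleft⟩ := ih hch.2 hg1
    simp only [List.map_cons, List.prod_cons, Equiv.Perm.mul_apply]
    generalize ((L.map (letterPerm (fun y => θ (FreeGroup.of y)) α β)).prod x) = z at *
    obtain ⟨a, b, v⟩ := z
    simp only at hv hhead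
    cases s with
    | inl g =>
      have hmv : α g a ≠ a := hmv
      refine ⟨p, hred, by simp; omega, hv, ?_, by simp, ?_⟩
      · intro y hy
        obtain ⟨h1, h2, h3⟩ := hhead y hy
        refine ⟨h1, h2, ?_⟩
        intro s hs
        simp only [List.head?_cons, Option.mem_some_iff] at hs
        subst hs
        refine ⟨fun _ => ?_, by simp⟩
        show y.1.1 ≠ α g a
        cases L with
        | nil => simp [hnil rfl] at hy
        | cons s' L =>
          have h4 := hch.1 s' (by simp)
          have h5 := (h3 s' (by simp)).2 (by simpa using h4)
          rw [h5]; exact hmv.symm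
      · intro hp s hs
        rcases List.mem_cons.1 hs with rfl | hs
        · rfl
        · exact hleft hp s hs
    | inr h =>
      have hmv : β h b ≠ b := hmv
      refine ⟨((a, β h b), true) :: ((a, b), false) :: p, ?_, by simp; omega, ?_, ?_, by simp,
        by simp⟩
      · unfold FreeGroup.IsReduced at *
        rw [List.isChain_cons_cons, List.isChain_cons]
        refine ⟨?_, ?_, hred⟩
        · intro h; simp at h; exact absurd h hmv
        · intro y hy hEq
          obtain ⟨h1, h2, h3⟩ := hhead y hy
          exfalso
          cases L with
          | nil => simp [hnil rfl] at hy
          | cons s' L =>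
            have h4 := hch.1 s' (by simp)
            have h5 := (h3 s' (by simp)).1 (by simpa using h4)
            exact h5 (by rw [← hEq])
      · have hsp : FreeGroup.mk (((a, β h b), true) :: ((a, b), false) :: p) =
            FreeGroup.of (a, β h b) * ((FreeGroup.of (a, b))⁻¹ * FreeGroup.mk p) := by
          simp only [FreeGroup.of, FreeGroup.inv_mk, FreeGroup.mul_mk]; rfl
        rw [hsp, map_mul, map_mul, map_inv, mul_assoc, mul_assoc, ← hv]
        rfl
      · intro y hy
        simp only [List.head?_cons, Option.mem_some_iff] at hy
        subst hy
        refine ⟨rfl, rfl, ?_⟩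
        intro s hs
        simp only [List.head?_cons, Option.mem_some_iff] at hs
        subst hs
        exact ⟨by simp, fun _ => rfl⟩

theorem moved_of_goodAt (θ : FreeGroup (A × B) →* V) (α : G → Equiv.Perm A)
    (β : H → Equiv.Perm B) (x : A × B × V) (L : List (G ⊕ H)) (hne : L ≠ [])
    (hch : L.IsChain (fun s s' => s.isLeft ≠ s'.isLeft))
    (hgood : GoodAt (fun y => θ (FreeGroup.of y)) α β L x) (n : ℕ) (hn : 2 * L.length ≤ n)
    (hθ : ∀ p : List ((A × B) × Bool), FreeGroup.IsReduced p → p.length ≤ n → p ≠ [] →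
        θ (FreeGroup.mk p) ≠ 1) :
    (L.map (letterPerm (fun y => θ (FreeGroup.of y)) α β)).prod x ≠ x := by
  obtain ⟨p, hred, hlen, hv, -, -, hleft⟩ := exists_path θ α β x L hch hgood
  intro hx
  by_cases hp : p = []
  · have hl := hleft hp
    match L, hne, hch with
    | [Sum.inl g], _, _ =>
      have h1 : α g x.1 ≠ x.1 := hgood.2
      apply h1
      have := congrArg Prod.fst hx
      simpa [letterPerm, actL] using this
    | [Sum.inr h], _, _ => simpa using hl (Sum.inr h) (by simp)
    | s :: s' :: L, _, hch =>
      rw [List.isChain_cons_cons] at hch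
      exact hch.1 ((hl s (by simp)).trans (hl s' (by simp)).symm)
  · rw [hx] at hv
    exact hθ p hred (hlen.trans hn) hp (by simpa using hv.symm)

end twisted

theorem isSofic_coprod_of_permSofic {G H : Type*} [Group G] [Group H]
    (hG : PermSofic G) (hH : PermSofic H) : IsSofic (Monoid.Coprod G H) := by
  classical
  let I := Finset G × Finset H × ℕ
  have hpos : ∀ i : I, (0 : ℝ) < 1 / ((i.2.2 : ℝ) + 1) := fun i => by positivity
  choose A fA nA α S hS hα using fun i : I => hG i.1 (1 / ((i.2.2 : ℝ) + 1)) (hpos i)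
  choose B fB nB β T hT hβ using fun i : I => hH i.2.1 (1 / ((i.2.2 : ℝ) + 1)) (hpos i)
  choose V gV fV θ hθ using fun i : I => freeGroup_quotient (A i × B i) i.2.2
  let X : I → Type := fun i => A i × B i × V i
  let l : Filter I := Filter.atTop
  let t : ∀ i, A i × B i → V i := fun i y => θ i (FreeGroup.of y)
  have hlarge : ∀ ε : ℝ, 0 < ε → ∀ᶠ i : I in l, 1 / ((i.2.2 : ℝ) + 1) ≤ ε := by
    intro ε hε
    obtain ⟨n, hn⟩ := exists_nat_one_div_lt hε
    filter_upwards [Filter.eventually_ge_atTop ((∅, ∅, n) : I)] with i hi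
    refine le_trans ?_ hn.le
    have : n ≤ i.2.2 := hi.2.2
    have : (n : ℝ) ≤ i.2.2 := by exact_mod_cast this
    apply one_div_le_one_div_of_le <;> [positivity; linarith]
  have hSn : Negl l X (fun i => {x | x.1 ∈ S i}) := by
    intro ε hε
    filter_upwards [hlarge ε hε] with i hi
    have h1 : ({x : X i | x.1 ∈ S i}) = S i ×ˢ Set.univ := by
      ext x; exact ⟨fun h => ⟨h, trivial⟩, fun h => h.1⟩
    rw [h1, Set.ncard_prod, Set.ncard_univ, Nat.card_eq_fintype_card, Fintype.card_prod, Fintype.card_prod,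
      Fintype.card_prod]
    push_cast
    have h2 : ((S i).ncard : ℝ) ≤ ε * Fintype.card (A i) := (hS i).trans (by gcongr)
    calc ((S i).ncard : ℝ) * (Fintype.card (B i) * Fintype.card (V i))
        ≤ (ε * Fintype.card (A i)) * (Fintype.card (B i) * Fintype.card (V i)) := by gcongr
      _ = _ := by ring
  have hTn : Negl l X (fun i => {x | x.2.1 ∈ T i}) := by
    intro ε hε
    filter_upwards [hlarge ε hε] with i hi
    have h1 : ({x : X i | x.2.1 ∈ T i}) = Set.univ ×ˢ (T i ×ˢ Set.univ) := by
      ext x; exact ⟨fun h => ⟨trivial, h, trivial⟩, fun h => h.2.1⟩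
    rw [h1, Set.ncard_prod, Set.ncard_prod, Set.ncard_univ, Set.ncard_univ,
      Nat.card_eq_fintype_card, Nat.card_eq_fintype_card, Fintype.card_prod, Fintype.card_prod]
    push_cast
    have h2 : ((T i).ncard : ℝ) ≤ ε * Fintype.card (B i) := (hT i).trans (by gcongr)
    calc (Fintype.card (A i) : ℝ) * ((T i).ncard * Fintype.card (V i))
        ≤ Fintype.card (A i) * ((ε * Fintype.card (B i)) * Fintype.card (V i)) := by gcongr
      _ = _ := by ring
  have hev : ∀ {P : ∀ i : I, Set (X i)} {Q : ∀ i : I, Set (X i)}, Negl l X Q →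
      (∀ᶠ i in l, P i ⊆ Q i) → Negl l X P := by
    intro P Q hQ h ε hε
    filter_upwards [hQ ε hε, h] with i h1 h2
    refine le_trans ?_ h1
    exact_mod_cast Set.ncard_le_ncard h2 (Set.toFinite _)
  have hGmem : ∀ g : G, ∀ᶠ i : I in l, g ∈ i.1 := by
    intro g
    filter_upwards [Filter.eventually_ge_atTop (({g}, ∅, 0) : I)] with i hi
    exact hi.1 (by simp)
  have hHmem : ∀ g : H, ∀ᶠ i : I in l, g ∈ i.2.1 := by
    intro g
    filter_upwards [Filter.eventually_ge_atTop ((∅, {g}, 0) : I)] with i hi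
    exact hi.2.1 (by simp)
  let ΦG : G →* (hammingCon l X).Quotient := MonoidHom.mk'
    (fun g => ((fun i => actL (α i g) : ∀ i, Equiv.Perm (X i)) : (hammingCon l X).Quotient)) (by
      intro e f
      rw [← Con.coe_mul, hammingCon_iff]
      refine hev hSn ?_
      filter_upwards [hGmem e, hGmem f] with i he hf x hx
      by_contra hc
      apply hx
      have := (hα i x.1 hc).1 e he f hf
      exact Prod.ext this rfl)
  let ΦH : H →* (hammingCon l X).Quotient := MonoidHom.mk'
    (fun h => ((fun i => actR (t i) (β i h) : ∀ i, Equiv.Perm (X i)) :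
      (hammingCon l X).Quotient)) (by
      intro e f
      rw [← Con.coe_mul, hammingCon_iff]
      refine hev hTn ?_
      filter_upwards [hHmem e, hHmem f] with i he hf x hx
      by_contra hc
      apply hx
      have := (hβ i x.2.1 hc).1 e he f hf
      simp [actR, this])
  refine isSofic_of_approx l X (Monoid.Coprod.lift ΦG ΦH) ?_
  intro w hw
  obtain ⟨L, ⟨hch, hnt⟩, rfl⟩ := exists_altWord w
  have hLne : L ≠ [] := by rintro rfl; exact hw rfl
  refine ⟨fun i => (L.map (letterPerm (t i) (α i) (β i))).prod, ?_, ?_⟩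
  · clear hch hnt hw hLne
    induction L with
    | nil => simp only [List.map_nil, List.prod_nil, map_one]; rfl
    | cons s L ih =>
      simp only [List.map_cons, List.prod_cons, map_mul]
      rw [← ih]
      cases s with
      | inl g => simp only [Sum.elim_inl, Monoid.Coprod.lift_apply_inl]; rfl
      | inr g => simp only [Sum.elim_inr, Monoid.Coprod.lift_apply_inr]; rfl
  · have hbad : Negl l X (fun i => {x | ¬ GoodAt (t i) (α i) (β i) L x}) := by
      clear hch hw hLne
      induction L with
      | nil => exact Negl.empty.mono (fun i x hx => hx trivial)
      | cons s L ih =>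
        have h1 := ih (fun s hs => hnt s (List.mem_cons_of_mem _ hs))
        have h2 : Negl l X (fun i => {x | ¬ Moves (α i) (β i) s x}) := by
          cases s with
          | inl g =>
            have hg : g ≠ 1 := (hnt _ List.mem_cons_self).1 g rfl
            refine hev hSn ?_
            filter_upwards [hGmem g] with i hi x hx
            by_contra hc
            exact hx ((hα i x.1 hc).2 g hi hg)
          | inr h =>
            have hg : h ≠ 1 := (hnt _ List.mem_cons_self).2 h rfl
            refine hev hTn ?_
            filter_upwards [hHmem h] with i hi x hx
            by_contra hc
            exact hx ((hβ i x.2.1 hc).2 h hi hg)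
        refine (h1.union
          (h2.preimage (fun i => (L.map (letterPerm (t i) (α i) (β i))).prod))).mono ?_
        intro i x hx
        by_contra hc
        simp only [Set.mem_union, Set.mem_preimage, Set.mem_ofPred_eq, not_or, not_not] at hc
        exact hx hc
    refine hev hbad ?_
    filter_upwards [Filter.eventually_ge_atTop ((∅, ∅, 2 * L.length) : I)] with i hi x hx hgood
    exact moved_of_goodAt (θ i) (α i) (β i) x L hLne hch hgood i.2.2 hi.2.2 (hθ i) hx

/-- The free product of two locally residually amenable groups is sofic. -/
theorem isSofic_coprod_of_locally_residuallyAmenable {G H : Type*} [Group G] [Group H]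
    (hG : ∀ K : Subgroup G, K.FG → ResiduallyAmenable K)
    (hH : ∀ K : Subgroup H, K.FG → ResiduallyAmenable K) :
    IsSofic (Monoid.Coprod G H) := by
  exact isSofic_coprod_of_permSofic (permSofic_of_locally hG) (permSofic_of_locally hH)
end
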